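/- arXiv:2602.19085 — 9 statements merged into one kernel-verified Lean document; each statement's English description precedes it below -/
import Mathlib

section
/- Let n, m be positive integers, with valuations v_{i,j} ∈ [0, v̄], budgets λ_i > 0, and target RoS parameters τ_i ≥ 1. Suppose x ∈ [0,1]^{n×m}, d ∈ ℝ_{≥0}^n, c ∈ ℝ^n, w ∈ ℝ_{≥0}^n, p ∈ ℝ^m satisfy the KKT conditions: (i) w_i ≤ 1/τ_i for all i; (ii) x_{i,j}·(p_j − w_i v_{i,j}) = 0 for all i, j; (iii) w_i·(c_i − ∑_{j=1}^m x_{i,j} v_{i,j} − d_i) = 0 for all i; (iv) d_i·(w_i − 1/τ_i) = 0 for all i; (v) w_i c_i = λ_i for all i. Then for every buyer i, the RoS constraint ∑_{j=1}^m v_{i,j} x_{i,j} ≥ τ_i ∑_{j=1}^m p_j x_{i,j} and the budget constraint ∑_{j=1}^m p_j x_{i,j} ≤ λ_i both hold. -/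
/-!
By `h2`, buyer `i` pays exactly `w i` times the value obtained. Since `w i ≤ 1 / tau i`, the RoS
constraint follows. Multiplying the value by `w i` and using `h3` and `h5`, the payment equals
`lam i - w i * d i`, which is at most `lam i` because `w i` and `d i` are nonnegative.
-/

/-- Feasibility of the budget and RoS constraints at the KKT point of the
extended Eisenberg-Gale program. -/
theorem extended_EG_feasibility
    (n m : ℕ) (hn : 0 < n) (hm : 0 < m)
    (v : Fin n → Fin m → ℝ) (vbar : ℝ)
    (hv : ∀ i j, v i j ∈ Set.Icc (0 : ℝ) vbar)
    (lam tau : Fin n → ℝ)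
    (hlam : ∀ i, 0 < lam i) (htau : ∀ i, 1 ≤ tau i)
    (x : Fin n → Fin m → ℝ) (hx : ∀ i j, x i j ∈ Set.Icc (0 : ℝ) 1)
    (d c w : Fin n → ℝ) (p : Fin m → ℝ)
    (hd : ∀ i, 0 ≤ d i) (hw : ∀ i, 0 ≤ w i)
    (h1 : ∀ i, w i ≤ 1 / tau i)
    (h2 : ∀ i j, x i j * (p j - w i * v i j) = 0)
    (h3 : ∀ i, w i * (c i - (∑ j, x i j * v i j) - d i) = 0)
    (h4 : ∀ i, d i * (w i - 1 / tau i) = 0)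
    (h5 : ∀ i, w i * c i = lam i) :
    ∀ i, (∑ j, v i j * x i j) ≥ tau i * ∑ j, p j * x i j ∧
      (∑ j, p j * x i j) ≤ lam i := by
  intro i
  -- Buyer `i` only receives items priced at `w i * v i j`, so the payment is `w i` times the value.
  have hpay : ∑ j, p j * x i j = w i * ∑ j, v i j * x i j := by
    rw [Finset.mul_sum]
    exact Finset.sum_congr rfl fun j _ => by linear_combination h2 i j
  have hval : 0 ≤ ∑ j, v i j * x i j :=
    Finset.sum_nonneg fun j _ => mul_nonneg (hv i j).1 (hx i j).1
  have hcomm : ∑ j, x i j * v i j = ∑ j, v i j * x i j :=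
    Finset.sum_congr rfl fun j _ => mul_comm _ _
  have hwt : w i * tau i ≤ 1 :=
    (le_div_iff₀ (zero_lt_one.trans_le (htau i))).1 (h1 i)
  have h3i := h3 i
  rw [hcomm] at h3i
  rw [hpay]
  constructor
  · nlinarith [mul_le_mul_of_nonneg_right hwt hval]
  · -- `w i * value = w i * c i - w i * d i = lam i - w i * d i`
    linarith [mul_nonneg (hw i) (hd i), h5 i]
end

section
/- Let n, m be positive integers, valuations v_{i,j} ∈ [0, v̄] with v̄ > 0, budgets λ_i > 0, and target RoS parameters τ_i ≥ 1. Suppose x ∈ [0,1]^{n×m}, d ∈ ℝ_{≥0}^n, c ∈ ℝ^n, w ∈ ℝ_{≥0}^n satisfy: (i) w_i ≤ 1/τ_i for all i; (ii) w_i·(c_i − ∑_{j=1}^m x_{i,j} v_{i,j} − d_i) = 0 for all i; (iii) d_i·(w_i − 1/τ_i) = 0 for all i; (iv) w_i c_i = λ_i for all i. Then for every buyer i, w_i ≥ min{ λ_i/(m·v̄), 1/τ_i }. -/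
/-!
Since `w i * c i = lam i > 0`, the multiplier `w i` is nonzero. If `d i ≠ 0`, complementary slackness
for `d i` gives `w i = 1 / tau i`. If `d i = 0`, complementary slackness for `w i` gives
`c i = ∑ j, x i j * v i j ≤ m * vbar`, so `lam i = w i * c i ≤ w i * (m * vbar)`.
-/

/-- Lower bound on the dual variables of the extended Eisenberg-Gale program. -/
theorem extended_EG_dual_lower_bound
    (n m : ℕ) (hn : 0 < n) (hm : 0 < m)
    (v : Fin n → Fin m → ℝ) (vbar : ℝ) (hvbar : 0 < vbar)
    (hv : ∀ i j, v i j ∈ Set.Icc (0 : ℝ) vbar)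
    (lam tau : Fin n → ℝ)
    (hlam : ∀ i, 0 < lam i) (htau : ∀ i, 1 ≤ tau i)
    (x : Fin n → Fin m → ℝ) (hx : ∀ i j, x i j ∈ Set.Icc (0 : ℝ) 1)
    (d c w : Fin n → ℝ)
    (hd : ∀ i, 0 ≤ d i) (hw : ∀ i, 0 ≤ w i)
    (h1 : ∀ i, w i ≤ 1 / tau i)
    (h2 : ∀ i, w i * (c i - (∑ j, x i j * v i j) - d i) = 0)
    (h3 : ∀ i, d i * (w i - 1 / tau i) = 0)
    (h4 : ∀ i, w i * c i = lam i) :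
    ∀ i, min (lam i / ((m : ℝ) * vbar)) (1 / tau i) ≤ w i := by
  intro i
  have hwi : w i ≠ 0 := left_ne_zero_of_mul (h4 i ▸ (hlam i).ne')
  rcases mul_eq_zero.mp (h3 i) with hdi | hwt
  · refine (min_le_left _ _).trans ?_
    have hc : c i = ∑ j, x i j * v i j := by
      have := (mul_eq_zero.mp (h2 i)).resolve_left hwi
      linarith
    have hsum : ∑ j, x i j * v i j ≤ (m : ℝ) * vbar := by
      calc ∑ j, x i j * v i j ≤ ∑ _j : Fin m, vbar :=
            Finset.sum_le_sum fun j _ =>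
              (mul_le_of_le_one_left (hv i j).1 (hx i j).2).trans (hv i j).2
        _ = (m : ℝ) * vbar := by simp
    have hm' : (0 : ℝ) < m := Nat.cast_pos.mpr hm
    rw [div_le_iff₀ (mul_pos hm' hvbar), ← h4 i, hc]
    exact mul_le_mul_of_nonneg_left hsum (hw i)
  · exact (min_le_right _ _).trans (sub_eq_zero.mp hwt).ge
end

section
/- Fix one buyer with valuations v_j ≥ 0 for j ∈ [m], budget λ > 0, target RoS τ ≥ 1, multiplier w with 0 < w ≤ 1/τ, prices p_j satisfying p_j ≥ w·v_j for all j, supply caps q_j ∈ [0,1], and a bundle x* with x*_j ∈ [0, q_j] for all j, x*_j·(p_j − w·v_j) = 0 for all j, and ∑_{j=1}^m p_j x*_j ≤ λ. Assume either (a) ∑_{j=1}^m p_j x*_j = λ, or (b) w = 1/τ and x*_j = q_j for every j with w·v_j = p_j. Then for every bundle x with x_j ∈ [0, q_j] for all j, ∑_{j=1}^m p_j x_j ≤ λ, and ∑_{j=1}^m v_j x_j ≥ τ·∑_{j=1}^m p_j x_j, we have ∑_{j=1}^m v_j x_j ≤ ∑_{j=1}^m v_j x*_j. -/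
/-! Since `w * v j ≤ p j`, any bundle `x ≥ 0` satisfies `w * ∑ v x ≤ ∑ p x`, with equality at
`xstar` by complementary slackness. If the budget binds at `xstar`, then
`w * ∑ v x ≤ ∑ p x ≤ lam = ∑ p xstar = w * ∑ v xstar`. If instead `w = 1 / tau`, the RoS constraint
is the reverse inequality `∑ p x ≤ w * ∑ v x`, so every term `(p j - w * v j) * x j ≥ 0` vanishes:
`x` is supported on the items with `w * v j = p j`, which `xstar` buys up to their caps. -/

/-- Individual optimality of the equilibrium bundle for a value-maximizing buyer
with budget and RoS constraints, given prices and supply caps. -/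
theorem equilibrium_bundle_individually_optimal
    (m : ℕ) (hm : 0 < m)
    (v : Fin m → ℝ) (hv : ∀ j, 0 ≤ v j)
    (lam tau w : ℝ) (hlam : 0 < lam) (htau : 1 ≤ tau)
    (hw0 : 0 < w) (hw1 : w ≤ 1 / tau)
    (p q xstar : Fin m → ℝ)
    (hp : ∀ j, w * v j ≤ p j)
    (hq : ∀ j, q j ∈ Set.Icc (0 : ℝ) 1)
    (hxs : ∀ j, xstar j ∈ Set.Icc 0 (q j))
    (hcs : ∀ j, xstar j * (p j - w * v j) = 0)
    (hbud : ∑ j, p j * xstar j ≤ lam)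
    (hcase : (∑ j, p j * xstar j = lam) ∨
      (w = 1 / tau ∧ ∀ j, w * v j = p j → xstar j = q j)) :
    ∀ x : Fin m → ℝ, (∀ j, x j ∈ Set.Icc 0 (q j)) →
      (∑ j, p j * x j ≤ lam) →
      ((∑ j, v j * x j) ≥ tau * ∑ j, p j * x j) →
      (∑ j, v j * x j) ≤ ∑ j, v j * xstar j := by
  intro x hx hxb hros
  rcases hcase with hb | ⟨hwt, hfull⟩
  · have h1 : w * ∑ j, v j * x j ≤ ∑ j, p j * x j := by
      rw [Finset.mul_sum]
      refine Finset.sum_le_sum fun j _ => ?_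
      rw [← mul_assoc]
      exact mul_le_mul_of_nonneg_right (hp j) (hx j).1
    have h2 : w * ∑ j, v j * xstar j = ∑ j, p j * xstar j := by
      rw [Finset.mul_sum]
      refine Finset.sum_congr rfl fun j _ => ?_
      linear_combination -hcs j
    refine le_of_mul_le_mul_left ?_ hw0
    linarith
  · have hwtau : w * tau = 1 := by
      rw [hwt]
      exact one_div_mul_cancel (by linarith)
    have hnn : ∀ j ∈ Finset.univ, 0 ≤ (p j - w * v j) * x j := fun j _ =>
      mul_nonneg (sub_nonneg.2 (hp j)) (hx j).1
    have hsum : ∑ j, (p j - w * v j) * x j = ∑ j, p j * x j - w * ∑ j, v j * x j := by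
      rw [Finset.mul_sum, ← Finset.sum_sub_distrib]
      exact Finset.sum_congr rfl fun j _ => by ring
    have hle : ∑ j, p j * x j ≤ w * ∑ j, v j * x j := by
      have h := mul_le_mul_of_nonneg_left hros hw0.le
      rwa [← mul_assoc, hwtau, one_mul] at h
    have hzero : ∑ j, (p j - w * v j) * x j = 0 :=
      le_antisymm (by linarith) (Finset.sum_nonneg hnn)
    refine Finset.sum_le_sum fun j hj => mul_le_mul_of_nonneg_left ?_ (hv j)
    rcases mul_eq_zero.1 ((Finset.sum_eq_zero_iff_of_nonneg hnn).1 hzero j hj) with h | h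
    · rw [hfull j (by linarith)]
      exact (hx j).2
    · rw [h]
      exact (hxs j).1
end

section
/- Let n, m be positive integers, valuations v_{i,j} ≥ 0, budgets λ_i > 0, and target RoS parameters τ_i ≥ 1. Consider the dual program (C-DUAL): minimize ∑_{j=1}^m p_j − ∑_{i=1}^n λ_i log(w_i) over pairs (p, w) satisfying p_j ≥ w_i v_{i,j} for all i, j, 0 < w_i ≤ 1/τ_i for all i, and p_j ≥ 0 for all j. Then any two optimal solutions (p, w) and (p', w') of this program satisfy w = w' and p = p'; in particular the total revenue ∑_{j=1}^m p_j is the same for all optimal solutions. -/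
/-!
The feasible set is convex, and in the variable `w` the objective is strictly convex, because each
`lam i` is positive and `Real.log` is strictly concave on `(0, ∞)`. If two optima had `w ≠ w'`,
then their midpoint would have a smaller objective value than their average; hence `w = w'`.
Once `w` is shared, the pointwise minimum of the two price vectors is again feasible with the same
`w`, so optimality of each price vector forces it to equal that minimum.
-/

/-- Strict concavity of the logarithm at the midpoint of two distinct positive reals. -/
lemma log_add_log_lt_two_mul_log_midpoint {a b : ℝ} (ha : 0 < a) (hb : 0 < b) (hab : a ≠ b) :
    Real.log a + Real.log b < 2 * Real.log ((a + b) / 2) := by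
  have h := strictConcaveOn_log_Ioi.2 (Set.mem_Ioi.2 ha) (Set.mem_Ioi.2 hb) hab
    (by norm_num : (0 : ℝ) < 1 / 2) (by norm_num : (0 : ℝ) < 1 / 2) (by norm_num)
  simp only [smul_eq_mul] at h
  rw [show 1 / 2 * a + 1 / 2 * b = (a + b) / 2 by ring] at h
  linarith

/-- If `p` has the least total among the price vectors feasible for `w`, then it lies below every
other feasible price vector, since the pointwise minimum of the two is feasible as well. -/
lemma le_of_sum_minimal {n m : ℕ} {v : Fin n → Fin m → ℝ} {w : Fin n → ℝ} {p p' : Fin m → ℝ}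
    (hp : (∀ i j, w i * v i j ≤ p j) ∧ ∀ j, 0 ≤ p j)
    (hp' : (∀ i j, w i * v i j ≤ p' j) ∧ ∀ j, 0 ≤ p' j)
    (hmin : ∀ q : Fin m → ℝ, (∀ i j, w i * v i j ≤ q j) → (∀ j, 0 ≤ q j) →
      ∑ j, p j ≤ ∑ j, q j) (j : Fin m) : p j ≤ p' j := by
  have h := hmin (fun j => min (p j) (p' j)) (fun i j => le_min (hp.1 i j) (hp'.1 i j))
    (fun j => le_min (hp.2 j) (hp'.2 j))
  by_contra! hj
  have hlt : ∑ j, min (p j) (p' j) < ∑ j, p j :=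
    Finset.sum_lt_sum (fun j _ => min_le_left _ _) ⟨j, Finset.mem_univ j, min_lt_of_right_lt hj⟩
  exact absurd h (not_le.2 hlt)

/-- Uniqueness of the optimal solution of the dual program (C-DUAL): any two
optimal solutions coincide; in particular, the total revenue is unique. -/
theorem CDUAL_uniqueness
    (n m : ℕ) (hn : 0 < n) (hm : 0 < m)
    (v : Fin n → Fin m → ℝ) (hv : ∀ i j, 0 ≤ v i j)
    (lam tau : Fin n → ℝ)
    (hlam : ∀ i, 0 < lam i) (htau : ∀ i, 1 ≤ tau i)
    (p p' : Fin m → ℝ) (w w' : Fin n → ℝ)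
    (feas : (∀ i j, w i * v i j ≤ p j) ∧ (∀ i, 0 < w i ∧ w i ≤ 1 / tau i) ∧
      (∀ j, 0 ≤ p j))
    (feas' : (∀ i j, w' i * v i j ≤ p' j) ∧ (∀ i, 0 < w' i ∧ w' i ≤ 1 / tau i) ∧
      (∀ j, 0 ≤ p' j))
    (opt : ∀ (q : Fin m → ℝ) (u : Fin n → ℝ),
      ((∀ i j, u i * v i j ≤ q j) ∧ (∀ i, 0 < u i ∧ u i ≤ 1 / tau i) ∧
        (∀ j, 0 ≤ q j)) →
      (∑ j, p j) - (∑ i, lam i * Real.log (w i)) ≤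
        (∑ j, q j) - (∑ i, lam i * Real.log (u i)))
    (opt' : ∀ (q : Fin m → ℝ) (u : Fin n → ℝ),
      ((∀ i j, u i * v i j ≤ q j) ∧ (∀ i, 0 < u i ∧ u i ≤ 1 / tau i) ∧
        (∀ j, 0 ≤ q j)) →
      (∑ j, p' j) - (∑ i, lam i * Real.log (w' i)) ≤
        (∑ j, q j) - (∑ i, lam i * Real.log (u i))) :
    w = w' ∧ p = p' ∧ (∑ j, p j) = ∑ j, p' j := by
  have hw : w = w' := by
    by_contra hne
    obtain ⟨k, hk⟩ := Function.ne_iff.1 hne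
    have hmid : (∀ i j, (w i + w' i) / 2 * v i j ≤ (p j + p' j) / 2) ∧
        (∀ i, 0 < (w i + w' i) / 2 ∧ (w i + w' i) / 2 ≤ 1 / tau i) ∧
        (∀ j, 0 ≤ (p j + p' j) / 2) := by
      refine ⟨fun i j => ?_, fun i => ⟨?_, ?_⟩, fun j => ?_⟩
      · linarith [feas.1 i j, feas'.1 i j]
      · linarith [(feas.2.1 i).1, (feas'.2.1 i).1]
      · linarith [(feas.2.1 i).2, (feas'.2.1 i).2]
      · linarith [feas.2.2 j, feas'.2.2 j]
    have h := opt (fun j => (p j + p' j) / 2) (fun i => (w i + w' i) / 2) hmid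
    have h' := opt' (fun j => (p j + p' j) / 2) (fun i => (w i + w' i) / 2) hmid
    have hsum : ∑ j, (p j + p' j) / 2 = (∑ j, p j + ∑ j, p' j) / 2 := by
      rw [← Finset.sum_div, Finset.sum_add_distrib]
    have hlog : ∑ i, lam i * (Real.log (w i) + Real.log (w' i)) <
        ∑ i, lam i * (2 * Real.log ((w i + w' i) / 2)) := by
      refine Finset.sum_lt_sum (fun i _ => mul_le_mul_of_nonneg_left ?_ (hlam i).le)
        ⟨k, Finset.mem_univ k, mul_lt_mul_of_pos_left
          (log_add_log_lt_two_mul_log_midpoint (feas.2.1 k).1 (feas'.2.1 k).1 hk) (hlam k)⟩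
      by_cases hi : w i = w' i
      · rw [hi, add_self_div_two, two_mul]
      · exact (log_add_log_lt_two_mul_log_midpoint (feas.2.1 i).1 (feas'.2.1 i).1 hi).le
    simp only [mul_add, Finset.sum_add_distrib, mul_left_comm _ (2 : ℝ), ← Finset.mul_sum] at hlog
    simp only [hsum] at h h'
    linarith
  subst hw
  have hp : p = p' := funext fun j => le_antisymm
    (le_of_sum_minimal ⟨feas.1, feas.2.2⟩ ⟨feas'.1, feas'.2.2⟩
      (fun q h₁ h₂ => by linarith [opt q w ⟨h₁, feas.2.1, h₂⟩]) j)
    (le_of_sum_minimal ⟨feas'.1, feas'.2.2⟩ ⟨feas.1, feas.2.2⟩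
      (fun q h₁ h₂ => by linarith [opt' q w ⟨h₁, feas.2.1, h₂⟩]) j)
  exact ⟨rfl, hp, by rw [hp]⟩
end

section
/- Let n, m be positive integers, valuations v_{i,j} ≥ 0, budgets λ_i > 0, and target RoS parameters τ_i ≥ 1. Suppose (x*, d*, c*) is an optimal solution of the extended Eisenberg-Gale program: maximize ∑_{i=1}^n [ λ_i log(c_i) − d_i/τ_i ] over (x, d, c) with c_i = ∑_{j=1}^m x_{i,j} v_{i,j} + d_i for all i, ∑_{i=1}^n x_{i,j} ≤ 1 for all j, d_i ≥ 0 for all i, x_{i,j} ≥ 0 for all i, j, and c_i > 0 for all i. Then x* is Pareto efficient: there exists no x̂ with x̂_{i,j} ≥ 0 for all i, j and ∑_{i=1}^n x̂_{i,j} ≤ 1 for all j such that ∑_{j=1}^m v_{i,j} x̂_{i,j} ≥ ∑_{j=1}^m v_{i,j} x*_{i,j} for every buyer i with strict inequality for at least one buyer. -/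
/-! Holding `d` fixed, the objective is strictly increasing in each buyer's utility, because `log` is
strictly increasing on the positive reals and every `lam i` is positive. A Pareto-dominating
allocation paired with the same `d` is therefore feasible with a strictly larger objective,
contradicting optimality. -/

/-- Pareto efficiency of the allocation at any optimal solution of the
extended Eisenberg-Gale program. -/
theorem extended_EG_pareto_efficiency
    (n m : ℕ) (hn : 0 < n) (hm : 0 < m)
    (v : Fin n → Fin m → ℝ) (hv : ∀ i j, 0 ≤ v i j)
    (lam tau : Fin n → ℝ)
    (hlam : ∀ i, 0 < lam i) (htau : ∀ i, 1 ≤ tau i)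
    (x : Fin n → Fin m → ℝ) (d c : Fin n → ℝ)
    (feas : (∀ i, c i = (∑ j, x i j * v i j) + d i) ∧
      (∀ j, (∑ i, x i j) ≤ 1) ∧ (∀ i, 0 ≤ d i) ∧ (∀ i j, 0 ≤ x i j) ∧
      (∀ i, 0 < c i))
    (opt : ∀ (x' : Fin n → Fin m → ℝ) (d' c' : Fin n → ℝ),
      ((∀ i, c' i = (∑ j, x' i j * v i j) + d' i) ∧
        (∀ j, (∑ i, x' i j) ≤ 1) ∧ (∀ i, 0 ≤ d' i) ∧ (∀ i j, 0 ≤ x' i j) ∧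
        (∀ i, 0 < c' i)) →
      (∑ i, (lam i * Real.log (c' i) - d' i / tau i)) ≤
        ∑ i, (lam i * Real.log (c i) - d i / tau i)) :
    ¬ ∃ xhat : Fin n → Fin m → ℝ,
      (∀ i j, 0 ≤ xhat i j) ∧ (∀ j, (∑ i, xhat i j) ≤ 1) ∧
      (∀ i, (∑ j, v i j * x i j) ≤ ∑ j, v i j * xhat i j) ∧
      (∃ i, (∑ j, v i j * x i j) < ∑ j, v i j * xhat i j) := by
  rintro ⟨y, hy0, hy1, hle, k, hk⟩
  obtain ⟨hc, -, hd, -, hcpos⟩ := feas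
  simp only [mul_comm (v _ _)] at hle hk
  -- the competitor is the dominating allocation with the same slack `d`
  have hcc : ∀ i, c i ≤ (∑ j, y i j * v i j) + d i := fun i => by
    rw [hc i]; linarith [hle i]
  have hck : c k < (∑ j, y k j * v k j) + d k := by
    rw [hc k]; linarith
  refine (opt y d (fun i => (∑ j, y i j * v i j) + d i)
    ⟨fun _ => rfl, hy1, hd, hy0, fun i => (hcpos i).trans_le (hcc i)⟩).not_gt ?_
  refine Finset.sum_lt_sum (fun i _ => ?_) ⟨k, Finset.mem_univ k, ?_⟩
  · exact sub_le_sub_right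
      (mul_le_mul_of_nonneg_left (Real.log_le_log (hcpos i) (hcc i)) (hlam i).le) _
  · exact sub_lt_sub_right
      (mul_lt_mul_of_pos_left (Real.log_lt_log (hcpos k) hck) (hlam k)) _
end

section
/- Let n, m be positive integers, valuations v_{i,j} ≥ 0, budgets λ_i > 0, and target RoS parameters τ_i ≥ 1. Let w ∈ ℝ^n with 0 < w_i ≤ 1/τ_i for all i, and let p ∈ ℝ^m with p_j ≥ 0 and p_j ≥ w_i v_{i,j} for all i, j. Let [n] be partitioned into disjoint sets B and R such that w_i = 1/τ_i for every i ∈ R, and assume ∑_{i ∈ B} λ_i ≤ ∑_{j=1}^m p_j. Then for every (x, t) with x_{i,j} ≥ 0 for all i, j, ∑_{i=1}^n x_{i,j} ≤ 1 for all j, t_i ≤ λ_i for all i, and t_i ≤ (1/τ_i)·∑_{j=1}^m v_{i,j} x_{i,j} for all i, the total payment satisfies ∑_{i=1}^n t_i ≤ 2·∑_{j=1}^m p_j. That is, the market-clearing revenue ∑_j p_j is a 1/2-approximation of the first-best revenue. -/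
/-! The buyers in `B` pay at most `∑ i ∈ B, lam i ≤ ∑ j, p j` by their budget constraints. The buyers
in `R` pay at most `∑ j, w i * v i j * x i j ≤ ∑ j, p j * x i j` each, by their RoS constraints and
`w i = 1 / tau i`; since every item has unit supply, these bounds add up to at most `∑ j, p j`.
Each group thus accounts for at most one copy of the market-clearing revenue. -/

/-- The market-clearing revenue is a 1/2-approximation of the first-best
revenue: every feasible first-best outcome (x, t) pays at most twice the
market-clearing revenue. -/
theorem market_clearing_half_approximation
    (n m : ℕ) (hn : 0 < n) (hm : 0 < m)
    (v : Fin n → Fin m → ℝ) (hv : ∀ i j, 0 ≤ v i j)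
    (lam tau : Fin n → ℝ)
    (hlam : ∀ i, 0 < lam i) (htau : ∀ i, 1 ≤ tau i)
    (w : Fin n → ℝ) (hw : ∀ i, 0 < w i ∧ w i ≤ 1 / tau i)
    (p : Fin m → ℝ) (hp0 : ∀ j, 0 ≤ p j) (hp : ∀ i j, w i * v i j ≤ p j)
    (B R : Finset (Fin n)) (hBR : B ∪ R = Finset.univ) (hdisj : Disjoint B R)
    (hR : ∀ i ∈ R, w i = 1 / tau i)
    (hB : (∑ i ∈ B, lam i) ≤ ∑ j, p j) :
    ∀ (x : Fin n → Fin m → ℝ) (t : Fin n → ℝ),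
      (∀ i j, 0 ≤ x i j) → (∀ j, (∑ i, x i j) ≤ 1) →
      (∀ i, t i ≤ lam i) →
      (∀ i, t i ≤ (1 / tau i) * ∑ j, v i j * x i j) →
      (∑ i, t i) ≤ 2 * ∑ j, p j := by
  intro x t hx hsupply hbud hros
  have hBpay : ∑ i ∈ B, t i ≤ ∑ j, p j := (Finset.sum_le_sum fun i _ => hbud i).trans hB
  have hRi : ∀ i ∈ R, t i ≤ ∑ j, p j * x i j := fun i hi => by
    refine (hros i).trans ?_
    rw [← hR i hi, Finset.mul_sum]
    refine Finset.sum_le_sum fun j _ => ?_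
    rw [← mul_assoc]
    exact mul_le_mul_of_nonneg_right (hp i j) (hx i j)
  have hRpay : ∑ i ∈ R, t i ≤ ∑ j, p j := by
    refine (Finset.sum_le_sum hRi).trans ?_
    rw [Finset.sum_comm]
    refine Finset.sum_le_sum fun j _ => ?_
    rw [← Finset.mul_sum]
    have hsub : ∑ i ∈ R, x i j ≤ ∑ i, x i j :=
      Finset.sum_le_sum_of_subset_of_nonneg (Finset.subset_univ R) fun i _ _ => hx i j
    exact mul_le_of_le_one_right (hp0 j) (hsub.trans (hsupply j))
  rw [← hBR, Finset.sum_union hdisj]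
  linarith
end

section
/- Let W ⊆ ℝ^n be a set on which every coordinate is strictly positive, let Φ : W → ℝ be any function, let λ ∈ ℝ^n, fix an index i ∈ [n] and a real number λ̂_i. Define G(w) = Φ(w) − ∑_{k=1}^n λ_k log(w_k) and Ĝ(w) = Φ(w) − ∑_{k ≠ i} λ_k log(w_k) − λ̂_i log(w_i). Suppose w* minimizes G over W and ŵ minimizes Ĝ over W. Then (λ̂_i − λ_i)·(log(ŵ_i) − log(w*_i)) ≥ 0; in particular, if λ̂_i ≤ λ_i then ŵ_i ≤ w*_i whenever the inequality (λ̂_i − λ_i)·log(w*_i) ≤ (λ̂_i − λ_i)·log(ŵ_i) is strict or log is applied to ordered values. -/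
/-- Exchange-argument monotonicity step used in the incentive-compatibility
proof: comparing minimizers of the dual objective under two reported budgets
for buyer i yields `(λ̂_i − λ_i)·(log ŵ_i − log w*_i) ≥ 0`. -/
theorem budget_misreport_monotonicity
    (n : ℕ) (hn : 0 < n)
    (W : Set (Fin n → ℝ)) (hW : ∀ w ∈ W, ∀ k, 0 < w k)
    (Phi : (Fin n → ℝ) → ℝ) (lam : Fin n → ℝ) (i : Fin n) (lamhat : ℝ)
    (G Ghat : (Fin n → ℝ) → ℝ)
    (hG : ∀ w, G w = Phi w - ∑ k, lam k * Real.log (w k))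
    (hGhat : ∀ w, Ghat w = Phi w -
      (∑ k ∈ Finset.univ.erase i, lam k * Real.log (w k)) -
      lamhat * Real.log (w i))
    (wstar what : Fin n → ℝ)
    (hwstar : wstar ∈ W ∧ ∀ w ∈ W, G wstar ≤ G w)
    (hwhat : what ∈ W ∧ ∀ w ∈ W, Ghat what ≤ Ghat w) :
    (lamhat - lam i) * (Real.log (what i) - Real.log (wstar i)) ≥ 0 := by
  have key : ∀ w, Ghat w = G w - (lamhat - lam i) * Real.log (w i) := by
    intro w
    rw [hG, hGhat, ← Finset.add_sum_erase _ _ (Finset.mem_univ i)]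
    ring
  -- Exchange: test each minimizer against the other; the values of `G` cancel in the sum.
  have h₁ := hwstar.2 what hwhat.1
  have h₂ := hwhat.2 wstar hwstar.1
  rw [key, key] at h₂
  linarith
end

section
/- Let n be a positive integer, j ≥ 1 an integer, ρ_i > 0 and τ_i ≥ 1 for i ∈ [n], W = ∏_{i=1}^n [w̲_i, 1/τ_i] with 0 < w̲_i ≤ 1/τ_i, ω¹ ∈ ℝ^n, and V^j(s) = min_{ω ∈ W} { ⟨s, ω − ω¹⟩ − j·∑_{i=1}^n ρ_i log(ω_i) } with unique minimizer Ω^j(s) ∈ W. Let σ' = j·min_{i∈[n]} ρ_i τ_i². Then for all s₁, s₂ ∈ ℝ^n: V^j(s₁ + s₂) ≥ V^j(s₁) + ⟨s₂, Ω^j(s₁) − ω¹⟩ − (1/(2σ'))·‖s₂‖₂². -/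
/-!
Write `f ω = ⟨s₁, ω - ω¹⟩ - j ∑ ρᵢ log ωᵢ`, `x = Ω s₁`, `y = Ω (s₁ + s₂)`. On `(0, 1/τᵢ]` the second
derivative of `-log` is at least `τᵢ²`, so `-log` lies above its tangents by `τᵢ²/2` times the
squared distance (`log_le_tangent_sub_sq`). The box `W` is convex, so minimality of `x` gives the
variational inequality `⟨∇f x, y - x⟩ ≥ 0` (`first_order_condition`). Together these yield
`f y ≥ f x + σ'/2 ‖y - x‖²`. Since `V (s₁ + s₂) = f y + ⟨s₂, y - ω¹⟩`, the claim follows from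
the Young inequality `⟨s₂, y - x⟩ + σ'/2 ‖y - x‖² ≥ -‖s₂‖² / (2σ')`, obtained by completing
the square in each coordinate.
-/

/-- `log` is `t²`-strongly concave on `(0, 1/t]`, in the form of a tangent-line bound. -/
lemma log_le_tangent_sub_sq {t x y : ℝ} (ht : 0 < t) (hx : 0 < x) (hy : 0 < y)
    (hxt : x ≤ 1 / t) (hyt : y ≤ 1 / t) :
    Real.log y ≤ Real.log x + (y - x) / x - t ^ 2 / 2 * (y - x) ^ 2 := by
  set h : ℝ → ℝ := fun u => Real.log u + t ^ 2 / 2 * (u - x) ^ 2 - (u - x) / x with hh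
  have hd : ∀ u, 0 < u → HasDerivAt h ((u - x) * (t ^ 2 - 1 / (x * u))) u := by
    intro u hu
    have h1 := ((Real.hasDerivAt_log hu.ne').add
      ((((hasDerivAt_id u).sub_const x).pow 2).const_mul (t ^ 2 / 2))).sub
      (((hasDerivAt_id u).sub_const x).div_const x)
    refine HasDerivAt.congr_deriv (f := h) h1 ?_
    simp only [id]
    field_simp
    push_cast
    ring
  have hneg : ∀ u, 0 < u → u ≤ 1 / t → t ^ 2 - 1 / (x * u) ≤ 0 := by
    intro u hu hut
    rw [le_div_iff₀ ht] at hxt hut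
    rw [sub_nonpos, le_div_iff₀ (by positivity)]
    nlinarith [mul_le_mul hxt hut (by positivity) zero_le_one]
  have key : h y ≤ h x := by
    rcases lt_trichotomy x y with hlt | heq | hlt
    · obtain ⟨c, hc, he⟩ := exists_hasDerivAt_eq_slope h _ hlt
        (fun u hu => (hd u (hx.trans_le hu.1)).continuousAt.continuousWithinAt)
        (fun u hu => hd u (hx.trans hu.1))
      rw [eq_div_iff (by linarith)] at he
      nlinarith [mul_nonneg (mul_nonneg (sub_nonneg.2 hc.1.le) (sub_nonneg.2 hlt.le))
        (neg_nonneg.2 (hneg c (hx.trans hc.1) (hc.2.le.trans hyt)))]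
    · rw [heq]
    · obtain ⟨c, hc, he⟩ := exists_hasDerivAt_eq_slope h _ hlt
        (fun u hu => (hd u (hy.trans_le hu.1)).continuousAt.continuousWithinAt)
        (fun u hu => hd u (hy.trans hu.1))
      rw [eq_div_iff (by linarith)] at he
      nlinarith [mul_nonneg (mul_nonneg (sub_nonneg.2 hc.2.le) (sub_nonneg.2 hlt.le))
        (neg_nonneg.2 (hneg c (hy.trans hc.1) (hc.2.le.trans hxt)))]
  simp only [hh, sub_self, zero_div, sub_zero] at key
  norm_num at key
  linarith

/-- If moving from `x` towards `y` does not decrease `ω ↦ ∑ i, (s i * ω i - c i * log (ω i))`,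
then the directional derivative of this function at `x` along `y - x` is nonnegative. -/
lemma first_order_condition {ι : Type*} [Fintype ι] {s c x y : ι → ℝ}
    (hc : ∀ i, 0 < c i) (hx : ∀ i, 0 < x i) (hy : ∀ i, 0 < y i)
    (hmin : ∀ t ∈ Set.Ioo (0 : ℝ) 1,
      ∑ i, (s i * x i - c i * Real.log (x i)) ≤
        ∑ i, (s i * (x i + t * (y i - x i)) - c i * Real.log (x i + t * (y i - x i)))) :
    0 ≤ ∑ i, (s i * (y i - x i) - c i * ((y i - x i) / x i)) := by
  have hlim : Filter.Tendsto
      (fun t : ℝ => ∑ i, (s i * (y i - x i) - c i * ((y i - x i) / (x i + t * (y i - x i)))))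
      (nhdsWithin 0 (Set.Ioi 0))
      (nhds (∑ i, (s i * (y i - x i) - c i * ((y i - x i) / x i)))) := by
    apply Filter.Tendsto.mono_left _ nhdsWithin_le_nhds
    refine tendsto_finsetSum _ fun i _ => ?_
    have : ContinuousAt
        (fun t : ℝ => s i * (y i - x i) - c i * ((y i - x i) / (x i + t * (y i - x i)))) 0 := by
      have h0 : x i + 0 * (y i - x i) ≠ 0 := by simpa using (hx i).ne'
      fun_prop (disch := assumption)
    simpa [ContinuousAt] using this
  refine ge_of_tendsto hlim ?_
  filter_upwards [Ioo_mem_nhdsGT (zero_lt_one' ℝ)] with t ht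
  have hm := hmin t ht
  rw [← sub_nonneg, ← Finset.sum_sub_distrib] at hm
  -- By `log r ≥ 1 - 1/r`, the difference quotient at `t` is at most the `t`-th term of the limit.
  have hle : ∑ i, ((s i * (x i + t * (y i - x i)) - c i * Real.log (x i + t * (y i - x i)))
        - (s i * x i - c i * Real.log (x i)))
      ≤ t * ∑ i, (s i * (y i - x i) - c i * ((y i - x i) / (x i + t * (y i - x i)))) := by
    rw [Finset.mul_sum]
    refine Finset.sum_le_sum fun i _ => ?_
    have hz : 0 < x i + t * (y i - x i) := by
      nlinarith [mul_pos ht.1 (hy i), mul_pos (sub_pos.2 ht.2) (hx i)]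
    have hl := Real.one_sub_inv_le_log_of_pos (div_pos hz (hx i))
    rw [Real.log_div hz.ne' (hx i).ne', inv_div] at hl
    have he : 1 - x i / (x i + t * (y i - x i))
        = t * ((y i - x i) / (x i + t * (y i - x i))) := by
      field_simp
      ring
    rw [he] at hl
    nlinarith [mul_le_mul_of_nonneg_left hl (hc i).le]
  exact nonneg_of_mul_nonneg_right (hm.trans hle) ht.1


/-- Quadratic lower bound (smoothness inequality) for the auxiliary value
function `V^j` of the regularized dual averaging algorithm. -/
theorem auxiliary_value_function_quadratic_lower_bound
    (n : ℕ) (hn : 0 < n) (j : ℕ) (hj : 1 ≤ j)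
    (rho tau wlow : Fin n → ℝ)
    (hrho : ∀ i, 0 < rho i) (htau : ∀ i, 1 ≤ tau i)
    (hwlow : ∀ i, 0 < wlow i ∧ wlow i ≤ 1 / tau i)
    (W : Set (Fin n → ℝ))
    (hWdef : W = {ω | ∀ i, ω i ∈ Set.Icc (wlow i) (1 / tau i)})
    (omega1 : Fin n → ℝ)
    (V : (Fin n → ℝ) → ℝ) (Omega : (Fin n → ℝ) → (Fin n → ℝ))
    (hOmega : ∀ s, Omega s ∈ W ∧ ∀ ω ∈ W,
      (∑ i, s i * (Omega s i - omega1 i)) -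
        (j : ℝ) * (∑ i, rho i * Real.log (Omega s i)) ≤
      (∑ i, s i * (ω i - omega1 i)) -
        (j : ℝ) * ∑ i, rho i * Real.log (ω i))
    (hV : ∀ s, V s = (∑ i, s i * (Omega s i - omega1 i)) -
      (j : ℝ) * ∑ i, rho i * Real.log (Omega s i))
    (sigma' : ℝ)
    (hsigma' : sigma' = (j : ℝ) *
      Finset.univ.inf' (Finset.univ_nonempty_iff.mpr ⟨⟨0, hn⟩⟩)
        (fun i => rho i * tau i ^ 2)) :
    ∀ s1 s2 : Fin n → ℝ,
      V (s1 + s2) ≥ V s1 + (∑ i, s2 i * (Omega s1 i - omega1 i)) -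
        (1 / (2 * sigma')) * ∑ i, (s2 i) ^ 2 := by
  intro s1 s2
  have hj0 : (0 : ℝ) < j := by exact_mod_cast hj
  have htau0 : ∀ i, 0 < tau i := fun i => zero_lt_one.trans_le (htau i)
  have hsig : 0 < sigma' := by
    rw [hsigma']
    refine mul_pos hj0 ((Finset.lt_inf'_iff _).2 fun i _ => ?_)
    exact mul_pos (hrho i) (pow_pos (htau0 i) 2)
  have hsig_le : ∀ i, sigma' ≤ j * rho i * tau i ^ 2 := by
    intro i
    rw [hsigma', mul_assoc]
    exact mul_le_mul_of_nonneg_left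
      (Finset.inf'_le (fun i => rho i * tau i ^ 2) (Finset.mem_univ i)) hj0.le
  have hxW := (hOmega s1).1
  have hyW := (hOmega (s1 + s2)).1
  have hmin := (hOmega s1).2
  rw [hV, hV]
  set x := Omega s1
  set y := Omega (s1 + s2)
  rw [hWdef] at hxW hyW
  have hx0 : ∀ i, 0 < x i := fun i => (hwlow i).1.trans_le (hxW i).1
  have hy0 : ∀ i, 0 < y i := fun i => (hwlow i).1.trans_le (hyW i).1
  have hfoc : 0 ≤ ∑ i, (s1 i * (y i - x i) - (j * rho i) * ((y i - x i) / x i)) := by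
    refine first_order_condition (fun i => mul_pos hj0 (hrho i)) hx0 hy0 fun t ht => ?_
    have hmem : (fun i => x i + t * (y i - x i)) ∈ W := by
      rw [hWdef]
      intro i
      obtain ⟨h1, h2⟩ := hxW i
      obtain ⟨h3, h4⟩ := hyW i
      constructor <;> nlinarith [ht.1, ht.2]
    have h := hmin _ hmem
    simp only [mul_sub, Finset.sum_sub_distrib, Finset.mul_sum, ← mul_assoc] at h ⊢
    linarith
  have hterm : ∑ i, (s1 i * (y i - x i) - (j * rho i) * ((y i - x i) / x i)) ≤
      ∑ i, ((s1 i + s2 i) * (y i - omega1 i) - j * (rho i * Real.log (y i))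
        - (s1 i * (x i - omega1 i) - j * (rho i * Real.log (x i)))
        - s2 i * (x i - omega1 i) + 1 / (2 * sigma') * s2 i ^ 2) := by
    refine Finset.sum_le_sum fun i _ => ?_
    have hl := mul_le_mul_of_nonneg_left
      (log_le_tangent_sub_sq (htau0 i) (hx0 i) (hy0 i) (hxW i).2 (hyW i).2)
      (mul_pos hj0 (hrho i)).le
    have hs := mul_le_mul_of_nonneg_right (hsig_le i) (sq_nonneg (y i - x i))
    have hyoung : 0 ≤ s2 i * (y i - x i) + sigma' / 2 * (y i - x i) ^ 2
        + 1 / (2 * sigma') * s2 i ^ 2 := by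
      have : s2 i * (y i - x i) + sigma' / 2 * (y i - x i) ^ 2 + 1 / (2 * sigma') * s2 i ^ 2
          = (sigma' * (y i - x i) + s2 i) ^ 2 / (2 * sigma') := by
        field_simp
        ring
      rw [this]
      positivity
    nlinarith
  have hfin := hfoc.trans hterm
  simp only [Finset.sum_add_distrib, Finset.sum_sub_distrib, ← Finset.mul_sum] at hfin
  simp only [Pi.add_apply]
  linarith
end

section
/- Let n, m be positive integers with m ≥ 2, valuations v_{i,j} ∈ [0, v̄], per-auction budgets ρ_i > 0, target RoS parameters τ_i ≥ 1, W = ∏_{i=1}^n [w̲_i, 1/τ_i] with 0 < w̲_i ≤ 1/τ_i, and define p̂_j(ω) = max_{i∈[n]} ω_i v_{i,j}. Consider the regularized dual averaging sequence: ω^1_i = 1/τ_i for all i; for each j ∈ [m], g^j ∈ ℝ^n is any vector with ‖g^j‖₂ ≤ v̄ satisfying p̂_j(u) ≥ p̂_j(ω^j) + ⟨g^j, u − ω^j⟩ for all u ∈ W; ḡ^j = ((j−1)·ḡ^{j−1} + g^j)/j with ḡ^0 = 0; and ω^{j+1} = argmin_{ω ∈ W} { ⟨j·ḡ^j, ω −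 ω^1⟩ − j·∑_{i=1}^n ρ_i log(ω_i) }. Then for every w ∈ W, the auxiliary regret satisfies ∑_{j=1}^m [ p̂_j(ω^j) − ∑_{i=1}^n ρ_i log(ω^j_i) ] − ∑_{j=1}^m [ p̂_j(w) − ∑_{i=1}^n ρ_i log(w_i) ] ≤ (v̄²/(2·min_{i∈[n]} ρ_i τ_i²))·log(m). -/
/-!
The objective separates over the coordinates once `phat (ω^j) - phat w` is linearized. Because each
`phat` is nondecreasing, a coordinate `i` with `g^j_i < 0` forces `ω^j_i` to be the lower endpoint
`wlow i`, and comparing with the vector that keeps `ω^j_i` at those coordinates gives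
`phat (ω^j) - phat w ≤ ∑ i, max (g^j_i) 0 * (ω^j_i - w_i)`. After multiplying by `τ_i`, coordinate `i`
becomes a problem on an interval `[l, 1]` with coefficients `x_j = g^j_i / (ρ_i τ_i)`, in which
`p_{j+1}` minimizes `s_j t - j log t`, where `s_j = x_1 + ⋯ + x_j`.

For this problem (`one_dim`) the regret is controlled by the potential
`∑_{i ≤ j} (max x_i 0 * (p_i - w) - log p_i + log w) + (s_j w - j log w)
  - (s_j p_{j+1} - j log p_{j+1}) - log p_{j+1}`,
which is shown to be at most `∑_{i ≤ j} c_i x_i ^ 2 / 2` plus a term `credit` that is present only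
when `p_{j+1} = 1`. The increment is estimated in `step`, with `c_j = 1 / j`. The quadratic
estimate `core` covers downward moves. A negative `x_j` costs up to `-x_j (1 - w)` when the iterate jumps
from the bottom to the top, and the credit created by that jump pays for it (`neg_top`); the credit
is kept while the iterate stays at the top (`top_top`), and is paid back when it leaves
(`top_leave`), or at the end by the suboptimality of the comparator.

Finally `∑_{j ≤ m} c_j ≤ log m` is required (`sum_weight_le`). This holds for `c_j = 1 / j` with
`j ≥ 3`, where `1 / j ≤ log (j / (j - 1))`, provided that `c_1 + c_2 ≤ log 2`. So the first
two rounds need better constants, `2 / 5` and `293 / 1000`, obtained by treating them jointly (`base`).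
Summing over the coordinates and using `∑ i, (g^j_i) ^ 2 ≤ vbar ^ 2` gives the bound.
-/

/-! ### Logarithm inequalities -/

lemma log_le_half_sub_inv {t : ℝ} (ht : 1 ≤ t) : Real.log t ≤ (t - t⁻¹) / 2 := by
  rw [← Real.sinh_log (by linarith)]
  exact Real.self_le_sinh_iff.2 (Real.log_nonneg ht)

lemma log_one_sub_le {z : ℝ} (h0 : 0 ≤ z) (h1 : z < 1) :
    Real.log (1 - z) ≤ -(z + z ^ 2 / 2) := by
  have h := Real.le_log_one_add_of_nonneg (x := z / (1 - z)) (by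
    have : 0 < 1 - z := by linarith
    positivity)
  have hz : 0 < 1 - z := by linarith
  have e1 : 1 + z / (1 - z) = (1 - z)⁻¹ := by field_simp; ring
  have e2 : 2 * (z / (1 - z)) / (z / (1 - z) + 2) = 2 * z / (2 - z) := by
    have : 2 - z ≠ 0 := by linarith
    have : z + (1 - z) * 2 ≠ 0 := by nlinarith
    field_simp
    ring
  rw [e1, e2, Real.log_inv] at h
  have : z + z ^ 2 / 2 ≤ 2 * z / (2 - z) := by
    rw [le_div_iff₀ (by linarith)]
    nlinarith [pow_nonneg h0 3]
  linarith

/-- The sharp constant is `1 / (2 e)`; `1 / 5` is half of `weight 1`. -/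
lemma log_le_quad {t : ℝ} (ht : 0 < t) : Real.log t ≤ t ^ 2 / 5 := by
  have h := Real.log_le_sub_one_of_pos (x := t ^ 2 / Real.exp 1) (by positivity)
  rw [Real.log_div (by positivity) (by positivity), Real.log_exp, Real.log_pow] at h
  have h2 : t ^ 2 / Real.exp 1 ≤ t ^ 2 / (27 / 10) := by
    gcongr
    linarith [Real.exp_one_gt_d9]
  push_cast at h
  have := sq_nonneg t
  linarith

/-! ### The increment of the potential -/

/-- The inequality behind every downward move of the iterate. In the variable `z = 1 - q / p` of the
move from `p` to `q`, and with `X = (s + x) p - k`, the increment of the potential is at most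
`(X ^ 2 - 1) / (2 (k + 1))`; the slack `1` is what pays for the credit in `top_leave`. -/
lemma core {k X z : ℝ} (hk : 0 ≤ k) (h0 : 0 ≤ z) (h1 : z < 1)
    (hX : k + 1 ≤ (X + k) * (1 - z)) :
    (k + X) * z + k * Real.log (1 - z) ≤ (X ^ 2 - 1) / (2 * (k + 1)) := by
  have hl := mul_le_mul_of_nonneg_left (log_one_sub_le h0 h1) hk
  have hXz : 1 + (k + 1) * z ^ 2 ≤ X - (k + 1) * z := by
    have : (1 + (k + 1) * z ^ 2 - X + (k + 1) * z) * (1 - z) ≤ 0 := by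
      nlinarith [pow_nonneg h0 3, mul_nonneg hk (pow_nonneg h0 3)]
    nlinarith
  rw [le_div_iff₀ (by linarith)]
  have hsq : (1 + (k + 1) * z ^ 2) ^ 2 ≤ (X - (k + 1) * z) ^ 2 :=
    pow_le_pow_left₀ (by positivity) hXz 2
  have := mul_le_mul_of_nonneg_left hl (show 0 ≤ 2 * (k + 1) by linarith)
  nlinarith [mul_nonneg (mul_nonneg hk h0) h0, sq_nonneg ((k + 1) * z ^ 2), sq_nonneg z]

/-- A negative coordinate `-u` at the bottom of the interval, when the next iterate is below the
top. Here `t = q / p` is the ratio of the two iterates. -/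
lemma neg_interior {k t u : ℝ} (hk : 0 < k) (ht : 1 ≤ t) (hu : k * t - (k + 1) ≤ u) :
    k * Real.log t - (k + 1) * (1 - t⁻¹) ≤ u ^ 2 / (2 * (k + 1)) := by
  have htp : 0 < t := by linarith
  rcases le_total (k * t) (k + 1) with h | h
  · have hl := mul_le_mul_of_nonneg_left (Real.log_le_sub_one_of_pos htp) hk.le
    have : k * (t - 1) - (k + 1) * (1 - t⁻¹) = (t - 1) * (k * t - (k + 1)) / t := by
      field_simp
    have h2 : (t - 1) * (k * t - (k + 1)) / t ≤ 0 :=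
      div_nonpos_of_nonpos_of_nonneg
        (mul_nonpos_of_nonneg_of_nonpos (by linarith) (by linarith)) htp.le
    have : 0 ≤ u ^ 2 / (2 * (k + 1)) := by positivity
    linarith
  · have hl := mul_le_mul_of_nonneg_left (log_le_half_sub_inv ht) hk.le
    set U := k * t - (k + 1) with hU
    have hUU : U ^ 2 / (2 * (k + 1)) ≤ u ^ 2 / (2 * (k + 1)) := by
      have : 0 ≤ U := by linarith
      gcongr
    have e : k * ((t - t⁻¹) / 2) - (k + 1) * (1 - t⁻¹) = (U ^ 2 - 1) / (2 * (U + (k + 1))) := by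
      have : U + (k + 1) = k * t := by rw [hU]; ring
      rw [this, hU]; field_simp; ring
    have : (U ^ 2 - 1) / (2 * (U + (k + 1))) ≤ U ^ 2 / (2 * (k + 1)) := by
      have : 0 ≤ U := by linarith
      rw [div_le_div_iff₀ (by linarith) (by linarith)]
      nlinarith [pow_nonneg this 3]
    linarith

/-- The polynomial inequality that remains in `neg_top_aux` after replacing the logarithm by
`(t - t⁻¹) / 2`; here `b = k - σ` and `j = k + 1`. -/
lemma neg_top_poly {j b u : ℝ} (hj : 3 ≤ j) (hb1 : -1 ≤ b) (hb2 : b ≤ j - 1) (hu : b ≤ u)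
    (hu0 : 0 ≤ u) :
    u ^ 2 * (1 + b - u) ≤ j * b ^ 2 + 3 / 2 * ((1 + b) * (2 - (1 + b) / j)) * (u - b) := by
  have h1 : 1 ≤ 2 - (1 + b) / j := by
    have : (1 + b) / j ≤ 1 := by rw [div_le_one (by linarith)]; linarith
    linarith
  have h2 : (1 + b) * 1 * (u - b) ≤ (1 + b) * (2 - (1 + b) / j) * (u - b) := by
    gcongr; linarith
  have h3 : 3 * b ^ 2 ≤ j * b ^ 2 := by gcongr
  suffices u ^ 2 * (1 + b - u) ≤ 3 * b ^ 2 + 3 / 2 * ((1 + b) * (u - b)) by linarith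
  rcases le_total (1 + b) u with h | h
  · have : u ^ 2 * (1 + b - u) ≤ 0 := mul_nonpos_of_nonneg_of_nonpos (sq_nonneg _) (by linarith)
    nlinarith [mul_nonneg (show 0 ≤ 1 + b by linarith) (show 0 ≤ u - b by linarith), sq_nonneg b]
  rcases le_total 0 b with hb | hb
  · obtain ⟨h', rfl⟩ : ∃ h', u = b + h' := ⟨u - b, by ring⟩
    have a1 : 0 ≤ h' := by linarith
    have a2 : h' ≤ 1 := by linarith
    nlinarith [mul_nonneg hb a1, mul_nonneg (mul_nonneg hb hb) a1, mul_nonneg (mul_nonneg hb a1) a1, mul_nonneg a1 (show 0 ≤ 1 - h' by linarith), sq_nonneg (b - h'), mul_nonneg (mul_nonneg a1 a1) a1]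
  · nlinarith [mul_nonneg (show 0 ≤ 1 + b by linarith) hu0, mul_nonneg (show 0 ≤ 1 + b by linarith) (show 0 ≤ -b by linarith), mul_nonneg (mul_nonneg (show 0 ≤ 1 + b by linarith) hu0) (show 0 ≤ 1 + b - u by linarith), mul_nonneg hu0 (show 0 ≤ 1 + b - u by linarith), mul_nonneg (mul_nonneg hu0 hu0) hu0, mul_nonneg (mul_nonneg hu0 hu0) (show 0 ≤ -b by linarith),  mul_nonneg (mul_nonneg (show 0 ≤ 1 + b by linarith) hu0) (show 0 ≤ 1 - u by linarith)]

/-- The extra potential carried when the (normalized) iterate `p` sits at the top `1` of the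
interval: with `s` the sum of the first `j` subgradient coordinates and `w` the comparator, it is
`3/4 (1 - w) (1 - (s⁺ / j) ^ 2)`, and it is `0` when `p < 1`. It records how far the unconstrained
minimizer `j / s` lies above `1`, which is needed when a negative coordinate is followed by a jump
to the top. -/
noncomputable def credit (j s p w : ℝ) : ℝ :=
  if p < 1 then 0 else 3 / 4 * (1 - w) * (1 - (max s 0 / j) ^ 2)

lemma credit_of_lt {j s p w : ℝ} (h : p < 1) : credit j s p w = 0 := if_pos h

lemma credit_one (j s w : ℝ) :
    credit j s 1 w = 3 / 4 * (1 - w) * (1 - (max s 0 / j) ^ 2) := if_neg (lt_irrefl _)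

lemma credit_nonneg {j s p w l : ℝ} (hj : 0 < j) (hlw : l ≤ w) (hw : w ≤ 1) (hp : p ≤ 1)
    (hs : l < p → s * p ≤ j) : 0 ≤ credit j s p w := by
  rcases hp.lt_or_eq with h | rfl
  · rw [credit_of_lt h]
  rw [credit_one]
  rcases hw.lt_or_eq with h | rfl
  · have hsj : max s 0 ≤ j := max_le (by linarith [hs (by linarith)]) hj.le
    have : max s 0 / j ≤ 1 := (div_le_one hj).2 hsj
    have h0 : 0 ≤ max s 0 / j := by positivity
    have : (max s 0 / j) ^ 2 ≤ 1 := pow_le_one₀ h0 this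
    have : 0 ≤ 1 - w := by linarith
    have : 0 ≤ 1 - (max s 0 / j) ^ 2 := by linarith
    positivity
  · simp

/-- The credit is nearly preserved when the iterate stays at the top; `δ = 1 - w`. -/
lemma top_top {k s x δ : ℝ} (hk : 2 ≤ k) (hx : 0 ≤ x) (hδ0 : 0 ≤ δ) (hδ : δ ≤ 1) :
    3 / 4 * δ * (1 - (max s 0 / k) ^ 2) ≤
      x ^ 2 / (2 * (k + 1)) + 3 / 4 * δ * (1 - (max (s + x) 0 / (k + 1)) ^ 2) := by
  set a := max s 0 / k with ha
  have ha0 : 0 ≤ a := by positivity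
  have hak : a * k = max s 0 := by rw [ha]; field_simp
  have h1 : max (s + x) 0 ≤ a * k + x := by
    rw [hak]; exact max_le (by linarith [le_max_left s 0]) (by linarith [le_max_right s 0])
  have h2 : (max (s + x) 0 / (k + 1)) ^ 2 ≤ ((a * k + x) / (k + 1)) ^ 2 := by
    gcongr
  have h3 : ((a * k + x) / (k + 1)) ^ 2 - a ^ 2 ≤ 4 / 3 * (x ^ 2 / (2 * (k + 1))) := by
    have : 4 / 3 * (x ^ 2 / (2 * (k + 1))) - (((a * k + x) / (k + 1)) ^ 2 - a ^ 2)
        = ((2 / 3 * k - 1 / 3) * x ^ 2 - 2 * k * a * x + (2 * k + 1) * a ^ 2) / (k + 1) ^ 2 := by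
      field_simp; ring
    have h4 : 0 ≤ (2 / 3 * k - 1 / 3) * x ^ 2 - 2 * k * a * x + (2 * k + 1) * a ^ 2 := by
      have : 0 ≤ (2 * k + 1) * ((2 / 3 * k - 1 / 3) * x ^ 2 - 2 * k * a * x + (2 * k + 1) * a ^ 2) := by
        nlinarith [sq_nonneg ((2 * k + 1) * a - k * x), mul_nonneg (show 0 ≤ k ^ 2 - 1 by nlinarith) (sq_nonneg x)]
      exact nonneg_of_mul_nonneg_right this (by linarith)
    have := div_nonneg h4 (sq_nonneg (k + 1))
    linarith
  have h5 : 0 ≤ x ^ 2 / (2 * (k + 1)) := by positivity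
  have h6 := mul_le_mul_of_nonneg_left (h2.trans (show _ ≤ a ^ 2 + 4 / 3 * (x ^ 2 / (2 * (k + 1))) by linarith)) hδ0
  have h7 := mul_le_mul_of_nonneg_right hδ h5
  nlinarith

/-- The credit can be given up when the iterate leaves the top; `δ = 1 - w`. -/
lemma top_leave {k s x q δ : ℝ} (hk : 2 ≤ k) (hs : s ≤ k) (hq0 : 0 < q) (hq : q < 1)
    (hS : k + 1 ≤ (s + x) * q) (hδ : δ ≤ 1) :
    (s + x) * (1 - q) + k * Real.log q + 3 / 4 * δ * (1 - (max s 0 / k) ^ 2) ≤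
      x ^ 2 / (2 * (k + 1)) := by
  have hc := core (k := k) (X := s + x - k) (z := 1 - q) (by linarith) (by linarith) (by linarith)
    (by linarith)
  rw [show 1 - (1 - q) = q by ring, show k + (s + x - k) = s + x by ring] at hc
  set X := s + x - k with hX
  have hX1 : 1 ≤ X := by
    have : 0 < s + x := by
      by_contra hcon
      nlinarith
    nlinarith
  set e := 1 - max s 0 / k with he
  have hsk : max s 0 ≤ k := max_le hs (by linarith)
  have he0 : 0 ≤ e := by
    have : max s 0 / k ≤ 1 := (div_le_one (by linarith)).2 hsk
    linarith
  have he1 : e ≤ 1 := by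
    have : 0 ≤ max s 0 / k := by positivity
    linarith
  have hxe : X + k * e ≤ x := by
    have : k * e = k - max s 0 := by rw [he]; field_simp
    linarith [le_max_left s 0]
  have hx2 : (X + k * e) ^ 2 / (2 * (k + 1)) ≤ x ^ 2 / (2 * (k + 1)) := by
    have : 0 ≤ X + k * e := by positivity
    gcongr
  have h1 : 1 - (max s 0 / k) ^ 2 = e * (2 - e) := by rw [he]; ring
  rw [h1]
  have h2 : 3 / 4 * δ * (e * (2 - e)) ≤ 3 / 4 * (e * (2 - e)) := by
    have := mul_le_mul_of_nonneg_right hδ (mul_nonneg he0 (show 0 ≤ 2 - e by linarith))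
    linarith
  have h3 : (X ^ 2 - 1) / (2 * (k + 1)) + 3 / 4 * (e * (2 - e)) ≤ (X + k * e) ^ 2 / (2 * (k + 1)) := by
    rw [div_add' _ _ _ (by linarith), div_le_div_iff_of_pos_right (by linarith)]
    nlinarith [mul_nonneg (mul_nonneg (show 0 ≤ k by linarith) he0) (show 0 ≤ X - 1 by linarith),
      sq_nonneg (2 - (k + 3) * e), mul_nonneg (show 0 ≤ k - 2 by linarith) (sq_nonneg e),
      mul_nonneg (sq_nonneg (k - 2)) (sq_nonneg e)]
  linarith

/-- The extreme case `δ = 1 - p` of `neg_top`, with `p = t⁻¹` and `σ` the new partial sum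
(or `0`). -/
lemma neg_top_aux {k t σ u : ℝ} (hk : 2 ≤ k) (ht : 1 < t) (hσ0 : 0 ≤ σ) (hσ1 : σ ≤ k + 1)
    (hu : k * t - σ ≤ u) :
    -(σ * (1 - t⁻¹)) - 3 / 4 * (1 - (σ / (k + 1)) ^ 2) * (1 - t⁻¹) + k * Real.log t ≤
      u ^ 2 / (2 * (k + 1)) := by
  have ht0 : 0 < t := by linarith
  have hlog := mul_le_mul_of_nonneg_left (log_le_half_sub_inv ht.le) (show 0 ≤ k by linarith)
  have he0 : 0 < 1 - t⁻¹ := by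
    have := inv_lt_one_of_one_lt₀ ht
    linarith
  have e1 : k * ((t - t⁻¹) / 2) = k * (t + 1) / 2 * (1 - t⁻¹) := by field_simp; ring
  have hcr : 0 ≤ 1 - (σ / (k + 1)) ^ 2 := by
    have : (σ / (k + 1)) ^ 2 ≤ 1 := pow_le_one₀ (by positivity) ((div_le_one (by linarith)).2 hσ1)
    linarith
  have hu2 : 0 ≤ u ^ 2 / (2 * (k + 1)) := by positivity
  rcases le_total (k * t) σ with h | h
  · have : k * (t + 1) / 2 * (1 - t⁻¹) ≤ σ * (1 - t⁻¹) := by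
      gcongr; nlinarith
    have := mul_nonneg hcr he0.le
    nlinarith
  set U := k * t - σ with hU
  have hU0 : 0 ≤ U := by linarith
  have hUu : U ^ 2 / (2 * (k + 1)) ≤ u ^ 2 / (2 * (k + 1)) := by gcongr
  have hb : k - σ ≤ U := by nlinarith
  have hpoly := neg_top_poly (j := k + 1) (b := k - σ) (u := U) (by linarith) (by linarith)
    (by linarith) hb hU0
  have hkt : 0 < k * t := by positivity
  have hcr' : (1 + (k - σ)) * (2 - (1 + (k - σ)) / (k + 1)) = (k + 1) * (1 - (σ / (k + 1)) ^ 2) := by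
    field_simp; ring
  rw [hcr'] at hpoly
  have hE : (1 - t⁻¹) = (U - (k - σ)) / (k * t) := by rw [hU]; field_simp; ring
  have hgoal : k * (t + 1) / 2 * (1 - t⁻¹) - σ * (1 - t⁻¹)
      - 3 / 4 * (1 - (σ / (k + 1)) ^ 2) * (1 - t⁻¹) ≤ U ^ 2 / (2 * (k + 1)) := by
    have e2 : k * (t + 1) / 2 * (1 - t⁻¹) - σ * (1 - t⁻¹)
      - 3 / 4 * (1 - (σ / (k + 1)) ^ 2) * (1 - t⁻¹)
      = ((U + (k - σ)) / 2 - 3 / 4 * (1 - (σ / (k + 1)) ^ 2)) * (1 - t⁻¹) := by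
      rw [hU]; ring
    have e3 : k * t = U + σ := by rw [hU]; ring
    rw [e2, hE, ← mul_div_assoc, div_le_div_iff₀ hkt (by linarith), e3]
    generalize 1 - (σ / (k + 1)) ^ 2 = C at hpoly
    linarith
  linarith

/-- A negative coordinate `-y` received at the bottom `p < 1` of the interval, followed by a jump to
the top; `δ = 1 - w`. The cost `y δ` is balanced by the credit created by the jump. -/
lemma neg_top {k s y p δ : ℝ} (hk : 2 ≤ k) (hp0 : 0 < p) (hp : p < 1) (hs : k ≤ s * p)
    (hS : s - y ≤ k + 1) (hδ0 : 0 ≤ δ) (hδ : δ ≤ 1 - p) :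
    y * δ - s * (1 - p) - k * Real.log p ≤
      y ^ 2 / (2 * (k + 1)) + 3 / 4 * δ * (1 - (max (s - y) 0 / (k + 1)) ^ 2) := by
  obtain ⟨t, rfl⟩ : ∃ t, p = t⁻¹ := ⟨p⁻¹, by simp⟩
  have ht0 : 0 < t := by simpa using hp0
  have ht : 1 < t := by
    have := (inv_lt_one₀ ht0).1 hp
    exact this
  have hst : k * t ≤ s := by
    rw [← div_eq_mul_inv, le_div_iff₀ ht0] at hs; exact hs
  rw [Real.log_inv]
  have hlog1 := mul_le_mul_of_nonneg_left (Real.log_le_sub_one_of_pos ht0) (show 0 ≤ k by linarith)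
  have hy2 : 0 ≤ y ^ 2 / (2 * (k + 1)) := by positivity
  have he0 : 0 < 1 - t⁻¹ := by linarith
  have hte : t * (1 - t⁻¹) = t - 1 := by field_simp
  -- affine in `δ`
  set κ := y - 3 / 4 * (1 - (max (s - y) 0 / (k + 1)) ^ 2) with hκ
  suffices κ * δ - s * (1 - t⁻¹) + k * Real.log t ≤ y ^ 2 / (2 * (k + 1)) by
    rw [hκ] at this; linarith
  rcases le_total κ 0 with hκ0 | hκ0
  · have : κ * δ ≤ 0 := mul_nonpos_of_nonpos_of_nonneg hκ0 hδ0
    have : k * t * (1 - t⁻¹) ≤ s * (1 - t⁻¹) := by gcongr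
    nlinarith
  have hκδ : κ * δ ≤ κ * (1 - t⁻¹) := by gcongr
  suffices κ * (1 - t⁻¹) - s * (1 - t⁻¹) + k * Real.log t ≤ y ^ 2 / (2 * (k + 1)) by linarith
  have key := fun σ u : ℝ => neg_top_aux (σ := σ) (u := u) hk ht
  rcases le_total 0 (s - y) with h | h
  · rw [max_eq_left h] at hκ
    have := key (s - y) y h hS (by linarith)
    rw [hκ]; nlinarith
  · rw [max_eq_right h] at hκ
    -- lowering `y` to `k * t` only helps
    have := key 0 (k * t) le_rfl (by linarith) (by linarith)
    have h5 : (k * t) ^ 2 / (2 * (k + 1)) + (y - k * t) * (1 - t⁻¹) + (k * t - s) * (1 - t⁻¹)≤ y ^ 2 / (2 * (k + 1)) := by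
      have a1 : (k * t - s) * (1 - t⁻¹) ≤ 0 := mul_nonpos_of_nonpos_of_nonneg (by linarith) he0.le
      have a2 : (y - k * t) * (1 - t⁻¹) ≤ (y - k * t) * (k * t / (k + 1)) := by
        have h8 : 1 - t⁻¹ ≤ k * t / (k + 1) := by
          rw [le_div_iff₀ (by linarith)]
          have : t * ((1 - t⁻¹) * (k + 1)) ≤ t * (k * t) := by
            rw [← mul_assoc, hte]; nlinarith [sq_nonneg (t - 1), mul_nonneg (show 0 ≤ k - 2 by linarith) (sq_nonneg (t - 1))]
          exact le_of_mul_le_mul_left this ht0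
        exact mul_le_mul_of_nonneg_left h8 (by linarith)
      have a3 : (k * t) ^ 2 / (2 * (k + 1)) + (y - k * t) * (k * t / (k + 1)) ≤ y ^ 2 / (2 * (k + 1)) := by
        rw [mul_div_assoc', div_add_div _ _ (by linarith) (by linarith), div_le_div_iff₀ (by nlinarith) (by linarith)]
        have : 0 ≤ (k + 1) ^ 2 * (y - k * t) ^ 2 := by positivity
        nlinarith
      linarith
    rw [hκ]
    nlinarith

/-- One step of the potential argument, for normalized data in `[l, 1]`: `p` and `q` are the
minimizers of `s t - k log t` and `(s + x) t - (k + 1) log t` (described by their first-order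
conditions), `x` is the new subgradient coordinate and `w` the comparator. -/
lemma step {k l s x p q w : ℝ} (hk : 2 ≤ k) (hl : 0 < l) (hlp : l ≤ p) (hp : p ≤ 1)
    (hlq : l ≤ q) (hq : q ≤ 1) (hlw : l ≤ w) (hw : w ≤ 1)
    (hp1 : p < 1 → k ≤ s * p) (hp2 : l < p → s * p ≤ k)
    (hq1 : q < 1 → k + 1 ≤ (s + x) * q) (hq2 : l < q → (s + x) * q ≤ k + 1)
    (hneg : x < 0 → p = l) :
    max x 0 * (p - w) + x * w - (s + x) * q + k * Real.log q + s * p - k * Real.log p +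
      credit k s p w ≤ x ^ 2 / (2 * (k + 1)) + credit (k + 1) (s + x) q w := by
  have hp0 : 0 < p := by linarith
  have hq0 : 0 < q := by linarith
  have hk0 : 0 < k := by linarith
  have hx2 : 0 ≤ x ^ 2 / (2 * (k + 1)) := by positivity
  have hcq : 0 ≤ credit (k + 1) (s + x) q w := credit_nonneg (by linarith) hlw hw hq hq2
  -- a bound for an upward move at the unperturbed state
  have hup : p < 1 → p ≤ q → s * (p - q) + k * Real.log q - k * Real.log p ≤ 0 := by
    intro h hpq
    have h1 := Real.log_le_sub_one_of_pos (x := q / p) (by positivity)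
    rw [Real.log_div hq0.ne' hp0.ne'] at h1
    have h2 := mul_le_mul_of_nonneg_left h1 hk0.le
    have h3 : k * (q / p - 1) = k / p * (q - p) := by field_simp
    have h4 : k / p * (q - p) ≤ s * (q - p) := by
      have : k / p ≤ s := (div_le_iff₀ hp0).2 (hp1 h)
      have : 0 ≤ q - p := by linarith
      gcongr
    linarith
  rcases lt_or_ge x 0 with hx | hx
  · obtain rfl := hneg hx
    rw [max_eq_right hx.le]
    rcases hp.lt_or_eq with hp | rfl
    · rw [credit_of_lt hp]
      have hxw : x * w ≤ x * p := mul_le_mul_of_nonpos_left hlw hx.le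
      rcases hq.lt_or_eq with hq | rfl
      · rcases hlq.lt_or_eq with hpq | rfl
        · -- interior: `(s + x) * q = k + 1`
          have hS : (s + x) * q = k + 1 := le_antisymm (hq2 hpq) (hq1 hq)
          have hSq : s + x = (k + 1) / q := by field_simp; linarith
          have hs : k / p ≤ s := (div_le_iff₀ hp0).2 (hp1 hp)
          have hu : k * (q / p) - (k + 1) ≤ -x := by
            have h1 : (k * (q / p) - (k + 1)) / q ≤ -x := by
              have : (k * (q / p) - (k + 1)) / q = k / p - (k + 1) / q := by field_simp
              rw [this]; linarith
            rcases le_total 0 (k * (q / p) - (k + 1)) with h | h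
            · exact (le_div_self h hq0 hq.le).trans h1
            · linarith
          have h := neg_interior (t := q / p) hk0 ((one_le_div hp0).2 hpq.le) hu
          rw [Real.log_div hq0.ne' hp0.ne', neg_sq] at h
          have h2 : (s + x) * p = (k + 1) * (q / p)⁻¹ := by rw [hSq]; field_simp
          linarith
        · linarith
      · rw [credit_one]
        have h := neg_top (k := k) (s := s) (y := -x) (p := p) (δ := 1 - w) hk hp0 hp (hp1 hp)
          (by linarith [hq2 hp]) (by linarith) (by linarith)
        rw [neg_sq, sub_neg_eq_add] at h
        rw [Real.log_one]
        linarith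
    · obtain rfl : q = 1 := le_antisymm hq hlq
      obtain rfl : w = 1 := le_antisymm hw hlw
      rw [credit_one]
      linarith
  · rw [max_eq_left hx]
    rcases hp.lt_or_eq with hp | rfl
    · rw [credit_of_lt hp]
      rcases le_total p q with hpq | hpq
      · have := hup hp hpq
        have : x * (p - q) ≤ 0 := mul_nonpos_of_nonneg_of_nonpos hx (by linarith)
        linarith
      rcases hpq.lt_or_eq with hpq | rfl
      · have hS := hq1 (by linarith)
        have hsp := hp2 (by linarith)
        have hz : 1 - (p - q) / p = q / p := by field_simp; ring
        have hX : (s + x) * p - k ≤ x := by nlinarith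
        have hX0 : 1 ≤ (s + x) * p - k := by
          have : 0 < s + x := by by_contra hcon; nlinarith
          nlinarith
        have h := core (k := k) (X := (s + x) * p - k) (z := (p - q) / p) hk0.le
          (div_nonneg (by linarith) hp0.le) ((div_lt_one hp0).2 (by linarith))
          (by rw [hz, sub_add_cancel]; have : (s + x) * p * (q / p) = (s + x) * q := by field_simp
              rw [this]; exact hS)
        rw [hz, Real.log_div hq0.ne' hp0.ne'] at h
        have h2 : (k + ((s + x) * p - k)) * ((p - q) / p) = (s + x) * (p - q) := by
          field_simp; ring
        rw [h2] at h
        have h3 : (((s + x) * p - k) ^ 2 - 1) / (2 * (k + 1)) ≤ x ^ 2 / (2 * (k + 1)) := by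
          gcongr
          have := pow_le_pow_left₀ (by linarith) hX 2
          linarith
        linarith
      · linarith
    · rw [credit_one]
      rcases hlp.lt_or_eq with hl1 | rfl
      · have hs : s ≤ k := by linarith [hp2 hl1]
        rw [Real.log_one]
        rcases hq.lt_or_eq with hq | rfl
        · rw [credit_of_lt hq]
          have := top_leave (x := x) (δ := 1 - w) hk hs hq0 hq (hq1 hq) (by linarith)
          linarith
        · rw [credit_one, Real.log_one]
          have := top_top (s := s) (δ := 1 - w) hk hx (by linarith) (by linarith)
          linarith
      · obtain rfl : q = 1 := le_antisymm hq hlq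
        obtain rfl : w = 1 := le_antisymm hw hlw
        rw [credit_one]
        linarith

/-! ### The first two rounds

The weight `1 / j` of the later rounds would be too large in total for `j = 1, 2`, where
`1 + 1 / 2 > log 2`. The first two rounds are therefore treated together, with the weights `2 / 5`
and `293 / 1000`, whose sum is just below `log 2`. -/

lemma le_log_div {v : ℝ} (hv : 1 ≤ v) : 2 * (v - 1) / (v + 1) ≤ Real.log v := by
  have h := Real.le_log_one_add_of_nonneg (x := v - 1) (by linarith)
  rwa [show v - 1 + 2 = v + 1 by ring, show 1 + (v - 1) = v by ring] at h

lemma base_flat_aux {v : ℝ} (hv : 1 ≤ v) : 2 * v - 2 - Real.log v ≤ 338 / 1000 * v ^ 2 := by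
  rcases le_total v 2 with h | h
  · have hl := le_log_div hv
    have : 2 * v - 2 - 338 / 1000 * v ^ 2 ≤ 2 * (v - 1) / (v + 1) := by
      rw [le_div_iff₀ (by linarith)]
      nlinarith [mul_nonneg (show 0 ≤ v - 1 by linarith) (sq_nonneg (v - 2)), sq_nonneg (v - 2), sq_nonneg (v-1)]
    linarith
  · have hl := le_log_div (v := v / 2) (by linarith)
    rw [Real.log_div (by linarith) (by norm_num)] at hl
    have h2 := Real.log_two_gt_d9
    have : 2 * v - 2 - 338 / 1000 * v ^ 2 - 693 / 1000 ≤ 2 * (v / 2 - 1) / (v / 2 + 1) := by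
      rw [le_div_iff₀ (by linarith)]
      nlinarith [mul_nonneg (show 0 ≤ v - 2 by linarith) (sq_nonneg (v - 3)), sq_nonneg (v - 3), sq_nonneg (v-5/2)]
    linarith

/-- The case where the second iterate is at the top and the third is not. The weights enter through
the minimum of `a ^ 2 / 5 + 293 / 2000 * b ^ 2` at given `a + b`. -/
lemma base_flat {a b : ℝ} (h : 2 ≤ a + b) :
    a + b - 2 - Real.log ((a + b) / 2) ≤ a ^ 2 / 5 + 293 / 2000 * b ^ 2 := by
  have := base_flat_aux (v := (a + b) / 2) (by linarith)
  nlinarith [sq_nonneg (a - 293 / 400 * b)]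

/-- `base_corner` after replacing `log (1 + y)` by `2 y / (2 + y)` and `log 2` by `0.6932`. The right
side is convex in `X`; it is minimized at its vertex for `y` small and at `X = 1` otherwise. -/
lemma base_corner_poly {X y : ℝ} (hX : 1 ≤ X) (hy : 0 ≤ y) :
    0 ≤ (X ^ 2 * (1 / 5 + 293 / 2000 * y ^ 2) - X + 2 - y - 6932 / 10000) * (2 + y) + 2 * y := by
  rcases le_total y (3 / 2) with h | h
  · set A := 1 / 5 + 293 / 2000 * y ^ 2 with hA
    have hA0 : 0 < A := by positivity
    have h1 : 0 ≤ 4 * A * ((13068 / 10000 - y) * (2 + y) + 2 * y) - (2 + y) := by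
      rw [hA]
      nlinarith [mul_nonneg (pow_nonneg hy 3) (show 0 ≤ 3 / 2 - y by linarith), mul_nonneg (sq_nonneg y) (show 0 ≤ 3 / 2 - y by linarith), sq_nonneg y]
    have h2 : 0 ≤ (2 * A * X - 1) ^ 2 * (2 + y) := by positivity
    have h3 : 0 ≤ A * ((X ^ 2 * A - X + 2 - y - 6932 / 10000) * (2 + y) + 2 * y) := by nlinarith
    exact nonneg_of_mul_nonneg_right h3 hA0
  · have h1 : X - 1 ≤ (X ^ 2 - 1) * (1 / 5 + 293 / 2000 * y ^ 2) := by
      have : (X ^ 2 - 1) * (1 / 2) ≤ (X ^ 2 - 1) * (1 / 5 + 293 / 2000 * y ^ 2) := by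
        apply mul_le_mul_of_nonneg_left _ (by nlinarith)
        nlinarith
      nlinarith
    have h2 : 0 ≤ (1 / 5 + 293 / 2000 * y ^ 2 - 1 + 2 - y - 6932 / 10000) * (2 + y) + 2 * y := by
      nlinarith [mul_nonneg hy (sq_nonneg (y - 29 / 10)), sq_nonneg (y - 29 / 10)]
    have h3 := mul_le_mul_of_nonneg_right h1 (show 0 ≤ 2 + y by linarith)
    nlinarith

/-- The case `p = 1 / X`, `b = X y` of `base_convex`. -/
lemma base_corner {X y : ℝ} (hX : 1 ≤ X) (hy : 0 ≤ y) :
    X - 2 + y + Real.log 2 - Real.log (1 + y) ≤ X ^ 2 * (1 / 5 + 293 / 2000 * y ^ 2) := by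
  have h1 := Real.le_log_one_add_of_nonneg hy
  have h2 := Real.log_two_lt_d9
  have h3 : 0 ≤ ((X ^ 2 * (1 / 5 + 293 / 2000 * y ^ 2) - X + 2 - y - 6932 / 10000) * (2 + y) + 2 * y) / (y + 2) :=
    div_nonneg (base_corner_poly hX hy) (by linarith)
  have h4 : ((X ^ 2 * (1 / 5 + 293 / 2000 * y ^ 2) - X + 2 - y - 6932 / 10000) * (2 + y) + 2 * y) / (y + 2)
     = (X ^ 2 * (1 / 5 + 293 / 2000 * y ^ 2) - X + 2 - y - 6932 / 10000) + 2 * y / (y + 2) := by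
    field_simp; ring
  linarith

/-- Both iterates off the top, nonnegative coordinates. The left side is convex in `p`, so it suffices
to treat the endpoints `p = 1` (`base_flat`) and `p = 1 / a` (`base_corner`). -/
lemma base_convex {a b p : ℝ} (ha : 1 < a) (hb : 0 ≤ b) (hs : 2 ≤ a + b) (hp1 : p ≤ 1) (hpa : 1 ≤ a * p) :
    a + b * p - 2 - Real.log ((a + b) / 2) - Real.log p ≤ a ^ 2 / 5 + 293 / 2000 * b ^ 2 := by
  have ha0 : 0 < a := by linarith
  have hinv : a⁻¹ < 1 := inv_lt_one_of_one_lt₀ ha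
  have hpi : a⁻¹ ≤ p := by rw [inv_le_iff_one_le_mul₀ ha0]; linarith
  set θ := (1 - p) / (1 - a⁻¹) with hθ
  have hθ0 : 0 ≤ θ := div_nonneg (by linarith) (by linarith)
  have hθ1 : θ ≤ 1 := (div_le_one (by linarith)).2 (by linarith)
  have hpθ : θ * a⁻¹ + (1 - θ) * 1 = p := by
    have : θ * (1 - a⁻¹) = 1 - p := by rw [hθ]; exact div_mul_cancel₀ _ (by linarith)
    linarith
  have hlog := strictConcaveOn_log_Ioi.concaveOn.2 (x := a⁻¹) (y := 1) (by simpa using ha0)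
    (by simp) hθ0 (show 0 ≤ 1 - θ by linarith) (by ring)
  simp only [smul_eq_mul, Real.log_inv, Real.log_one] at hlog
  rw [hpθ] at hlog
  have h1 := base_flat hs
  have h2 := base_corner (X := a) (y := b / a) ha.le (by positivity)
  have h3 : Real.log (1 + b / a) = Real.log ((a + b) / 2) + Real.log 2 - Real.log a := by
    rw [← Real.log_mul (by linarith) (by norm_num), ← Real.log_div (by linarith) ha0.ne']
    congr 1; field_simp
  have h4 : a ^ 2 * (1 / 5 + 293 / 2000 * (b / a) ^ 2) = a ^ 2 / 5 + 293 / 2000 * b ^ 2 := by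
    field_simp
  rw [h3, h4] at h2
  have h5 := mul_le_mul_of_nonneg_left h2 hθ0
  have h6 := mul_le_mul_of_nonneg_left h1 (show 0 ≤ 1 - θ by linarith)
  have h7 : b * p = θ * (b / a) + (1 - θ) * b := by rw [← hpθ]; field_simp
  rw [h7]
  linarith


/-- Second coordinate negative, third iterate off the top; `ξ = a / (a + b)` for `a = X`. -/
lemma base_neg_interior {X ξ : ℝ} (h1 : 1 ≤ ξ) (h2 : 2 * ξ ≤ X) :
    X - 3 + ξ⁻¹ + Real.log 2 + Real.log ξ ≤ X ^ 2 / 5 := by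
  have hl := log_le_half_sub_inv h1
  have hl2 := Real.log_two_lt_d9
  have hξ : 0 < ξ := by linarith
  have hq : ξ ^ 2 ≤ (1 + X / 2) * ξ - X / 2 := by
    nlinarith [mul_nonneg (show 0 ≤ ξ - 1 by linarith) (show 0 ≤ X / 2 - ξ by linarith)]
  have key : ξ ^ 2 + 2 * (X - 23068 / 10000 - X ^ 2 / 5) * ξ + 1 ≤ 0 := by
    rcases le_total (-2 / 5 * X ^ 2 + 5 / 2 * X - 36136 / 10000) 0 with h | h
    · have := mul_nonneg_of_nonpos_of_nonpos h (show 1 - ξ ≤ 0 by linarith)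
      nlinarith [sq_nonneg (X - 5 / 2)]
    · have := mul_nonneg h (show 0 ≤ X / 2 - ξ by linarith)
      nlinarith [mul_nonneg (show 0 ≤ X - 2 by linarith) (sq_nonneg (X - 14 / 5)), sq_nonneg (X - 14 / 5)]
  have h3 : X - 23068 / 10000 - X ^ 2 / 5 + (ξ + ξ⁻¹) / 2 ≤ 0 := by
    have : X - 23068 / 10000 - X ^ 2 / 5 + (ξ + ξ⁻¹) / 2 =
      (ξ ^ 2 + 2 * (X - 23068 / 10000 - X ^ 2 / 5) * ξ + 1) / (2 * ξ) := by field_simp; ring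
    rw [this]
    exact div_nonpos_of_nonpos_of_nonneg key (by linarith)
  linarith

/-- `X ≥ Y` in `base_neg_top`, with `Y = X - 2 A`. As a quadratic in `A`, the difference of the two
sides has negative discriminant for `X ≤ 2.6` and is monotone on `[0, 1]` for `X ≥ 2.6`. -/
lemma base_neg_top_poly {X A : ℝ} (hX : 1 ≤ X) (hA0 : 0 ≤ A) (hA1 : A ≤ 1) :
    (X - 1) * (X - 2 * A - 3 / 4 * (1 - A ^ 2)) + X * (X / 2 - 3068 / 10000) ≤
      X ^ 3 / 5 + 293 / 2000 * X * (X - 2 * A) ^ 2 := by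
  rcases le_total X (26 / 10) with h | h
  · have hα : 0 < 750 / 1000 - 164 / 1000 * X := by linarith
    have hD : 0 ≤ 4 * (750 / 1000 - 164 / 1000 * X) * (3465 / 10000 * X ^ 3 - 3 / 2 * X ^ 2 + 20568 / 10000 * X - 3 / 4)
        - (-586 / 1000 * X ^ 2 + 2 * (X - 1)) ^ 2 := by
      nlinarith [mul_nonneg (show 0 ≤ X - 1 by linarith) (show 0 ≤ 26 / 10 - X by linarith), mul_nonneg (mul_nonneg (show 0 ≤ X - 1 by linarith) (show 0 ≤ 26 / 10 - X by linarith)) (sq_nonneg (X - 2))]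
    have h2 := sq_nonneg (2 * (750 / 1000 - 164 / 1000 * X) * A + (-586 / 1000 * X ^ 2 + 2 * (X - 1)))
    have h3 : 0 ≤ (750 / 1000 - 164 / 1000 * X) * (X ^ 3 / 5 + 293 / 2000 * X * (X - 2 * A) ^ 2 -
      ((X - 1) * (X - 2 * A - 3 / 4 * (1 - A ^ 2)) + X * (X / 2 - 3068 / 10000))) := by nlinarith
    linarith [nonneg_of_mul_nonneg_right h3 hα]
  · have h1 : 0 ≤ -(-586 / 1000 * X ^ 2 + 2 * (X - 1)) - (750 / 1000 - 164 / 1000 * X) * (1 + A) := by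
      nlinarith
    have h2 := mul_nonneg (show 0 ≤ 1 - A by linarith) h1
    have h3 : 0 ≤ 3465 / 10000 * X ^ 3 - 2086 / 1000 * X ^ 2 + 38928 / 10000 * X - 2 := by
      nlinarith [mul_nonneg (show 0 ≤ X by linarith) (sq_nonneg (X - 26 / 10)), sq_nonneg (X - 26 / 10)]
    nlinarith

/-- `X ≤ Y` in `base_neg_top`: the difference of the two sides is increasing in `Y ≥ X`. -/
lemma base_neg_top_poly' {X Y : ℝ} (hX : 1 ≤ X) (hY : X ≤ Y) :
    (X - 1) * (Y - 3 / 4) + X * (X / 2 - 3068 / 10000) ≤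
      X ^ 3 / 5 + 293 / 2000 * X * Y ^ 2 := by
  have h1 : 0 ≤ 3465 / 10000 * X ^ 3 - 3 / 2 * X ^ 2 + 20568 / 10000 * X - 3 / 4 := by
    nlinarith [mul_nonneg (show 0 ≤ X by linarith) (sq_nonneg (X - 18 / 10)), sq_nonneg (X - 18 / 10)]
  have h2 : 0 ≤ 293 / 2000 * X * (Y + X) - (X - 1) := by
    have : 293 / 2000 * X * (X + X) ≤ 293 / 2000 * X * (Y + X) := by gcongr
    nlinarith [sq_nonneg (X - 17 / 10)]
  have := mul_nonneg (show 0 ≤ Y - X by linarith) h2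
  nlinarith

/-- Second coordinate `-Y` negative, third iterate at the top; `δ = 1 - w` and `X` is the first
coordinate. -/
lemma base_neg_top {X Y p δ : ℝ} (hp0 : 0 < p) (hp : p < 1) (hX : 1 ≤ X * p)
    (hs : X - Y ≤ 2) (hδ0 : 0 ≤ δ) (hδ : δ ≤ 1 - p) :
    Y * δ - Real.log p ≤ X ^ 2 / 5 + 293 / 2000 * Y ^ 2 +
      3 / 4 * δ * (1 - (max (X - Y) 0 / 2) ^ 2) := by
  have hX1 : 1 ≤ X := by nlinarith
  have hX0 : 0 < X := by linarith
  have hlog : -Real.log p ≤ Real.log X := by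
    have := Real.log_nonneg hX
    rw [Real.log_mul hX0.ne' hp0.ne'] at this
    linarith
  have hpX : 1 / X ≤ p := by rw [div_le_iff₀ hX0]; linarith
  set κ := Y - 3 / 4 * (1 - (max (X - Y) 0 / 2) ^ 2) with hκ
  suffices κ * δ - Real.log p ≤ X ^ 2 / 5 + 293 / 2000 * Y ^ 2 by rw [hκ] at this; linarith
  rcases le_total κ 0 with hk | hk
  · have := mul_nonpos_of_nonpos_of_nonneg hk hδ0
    have := log_le_quad hX0
    have := sq_nonneg Y
    linarith
  have h1 : κ * δ ≤ κ * (1 - 1 / X) := mul_le_mul_of_nonneg_left (by linarith) hk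
  have h2 : Real.log X ≤ X / 2 - 3068 / 10000 := by
    have h := Real.log_le_sub_one_of_pos (x := X / 2) (by linarith)
    rw [Real.log_div (by linarith) (by norm_num)] at h
    linarith [Real.log_two_lt_d9]
  have h3 : (X - 1) * κ + X * (X / 2 - 3068 / 10000) ≤ X ^ 3 / 5 + 293 / 2000 * X * Y ^ 2 := by
    rcases le_total X Y with h | h
    · rw [hκ, max_eq_right (by linarith)]
      have := base_neg_top_poly' hX1 h
      norm_num; linarith
    · rw [hκ, max_eq_left (by linarith)]
      have := base_neg_top_poly (A := (X - Y) / 2) hX1 (by linarith) (by linarith)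
      rw [show X - 2 * ((X - Y) / 2) = Y by ring] at this
      exact this
  have h4 : X * (κ * (1 - 1 / X) + (X / 2 - 3068 / 10000)) ≤ X * (X ^ 2 / 5 + 293 / 2000 * Y ^ 2) := by
    have : X * (κ * (1 - 1 / X)) = (X - 1) * κ := by field_simp
    linarith
  have := le_of_mul_le_mul_left h4 hX0
  linarith

/-- For `q ≥ 2 / s` the function `-s q + log q` is decreasing, hence at most its value at `2 / s`. -/
lemma leave_bound {s q : ℝ} (hq : 0 < q) (h : 2 ≤ s * q) :
    -(s * q) + Real.log q ≤ -2 - Real.log (s / 2) := by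
  have hs : 0 < s := by
    by_contra hcon
    nlinarith
  have h1 := Real.log_le_sub_one_of_pos (x := s / 2 * q) (by positivity)
  rw [Real.log_mul (by positivity) hq.ne'] at h1
  linarith

/-- The potential after the first two rounds: `1`, `p`, `q` are the first three iterates, `a`, `b` the
first two subgradient coordinates. -/
lemma base {l a b p q w : ℝ} (hl : 0 < l) (hlp : l ≤ p) (hp : p ≤ 1)
    (hlq : l ≤ q) (hq : q ≤ 1) (hlw : l ≤ w) (hw : w ≤ 1)
    (hp1 : p < 1 → 1 ≤ a * p) (hp2 : l < p → a * p ≤ 1)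
    (hq1 : q < 1 → 2 ≤ (a + b) * q) (hq2 : l < q → (a + b) * q ≤ 2)
    (hneg1 : a < 0 → 1 = l) (hneg2 : b < 0 → p = l) :
    max a 0 * (1 - w) + max b 0 * (p - w) + (a + b) * w - (a + b) * q + Real.log q - Real.log p ≤
      a ^ 2 / 5 + 293 / 2000 * b ^ 2 + credit 2 (a + b) q w := by
  have hp0 : 0 < p := by linarith
  have hq0 : 0 < q := by linarith
  have hcq : 0 ≤ credit 2 (a + b) q w := credit_nonneg (by norm_num) hlw hw hq hq2
  have ha2 := sq_nonneg a
  have hb2 := sq_nonneg b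
  rcases (hlp.trans hp).lt_or_eq with hl1 | rfl
  swap
  · obtain rfl : p = 1 := le_antisymm hp hlp
    obtain rfl : q = 1 := le_antisymm hq hlq
    obtain rfl : w = 1 := le_antisymm hw hlw
    simp only [Real.log_one]
    linarith
  have ha : 0 ≤ a := by
    by_contra hcon
    exact hl1.ne' (hneg1 (by linarith))
  rw [max_eq_left ha]
  rcases lt_or_ge b 0 with hb | hb
  · obtain rfl := hneg2 hb
    rw [max_eq_right hb.le]
    have hap := hp1 hl1
    have ha1 : 1 ≤ a := by nlinarith
    rcases hq.lt_or_eq with hq | rfl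
    · have hs := hq1 hq
      have h1 := leave_bound hq0 hs
      have hs2 : 2 ≤ a + b := by
        have : 0 < a + b := by
          by_contra hcon
          nlinarith
        nlinarith
      have ha0 : 0 < a := by linarith
      have hs0 : 0 < a + b := by linarith
      have h2 := base_neg_interior (X := a) (ξ := a / (a + b)) ((one_le_div hs0).2 (by linarith))
        (by rw [mul_div_assoc', div_le_iff₀ hs0]; nlinarith)
      have h3 := Real.log_nonneg hap
      rw [Real.log_mul ha0.ne' hp0.ne'] at h3
      rw [Real.log_div ha0.ne' hs0.ne', inv_div] at h2
      rw [Real.log_div hs0.ne' (by norm_num)] at h1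
      have h4 : (a + b) / a = 1 + b * (1 / a) := by field_simp
      have h5 : b * p ≤ b * (1 / a) :=
        mul_le_mul_of_nonpos_left (by rw [div_le_iff₀ ha0]; linarith) hb.le
      have h6 : b * w ≤ b * p := mul_le_mul_of_nonpos_left hlw hb.le
      rw [h4] at h2
      linarith
    · have hs := hq2 hl1
      have h := base_neg_top (X := a) (Y := -b) (δ := 1 - w) hp0 hl1 hap (by linarith)
        (by linarith) (by linarith)
      rw [sub_neg_eq_add, neg_sq] at h
      rw [credit_one, Real.log_one]
      linarith
  · rw [max_eq_left hb]
    rcases hp.lt_or_eq with hp | rfl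
    · have hap := hp1 hp
      have ha1 : 1 < a := by nlinarith
      rcases hq.lt_or_eq with hq | rfl
      · have hs := hq1 hq
        have hs2 : 2 ≤ a + b := by nlinarith
        have h1 := leave_bound hq0 hs
        have h2 := base_convex ha1 hb hs2 hp.le hap
        linarith
      · have h2 := Real.log_nonneg hap
        rw [Real.log_mul (by linarith) hp0.ne'] at h2
        have h3 := log_le_quad (t := a) (by linarith)
        have h4 : b * (p - 1) ≤ 0 := mul_nonpos_of_nonneg_of_nonpos hb (by linarith)
        rw [Real.log_one]
        linarith
    · rw [Real.log_one]
      rcases hq.lt_or_eq with hq | rfl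
      · have hs := hq1 hq
        have hs2 : 2 ≤ a + b := by nlinarith
        have h1 := leave_bound hq0 hs
        have h2 := base_flat hs2
        linarith
      · rw [Real.log_one]
        linarith

/-! ### The one-dimensional regret bound -/

/-- First-order conditions for a minimizer `p` of `s t - j log t` on `[l, 1]`. -/
lemma first_order {j s l p : ℝ} (hj : 0 < j) (hl : 0 < l) (hlp : l ≤ p) (hp : p ≤ 1)
    (hmin : ∀ t, l ≤ t → t ≤ 1 → s * p - j * Real.log p ≤ s * t - j * Real.log t) :
    (p < 1 → j ≤ s * p) ∧ (l < p → s * p ≤ j) := by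
  have hp0 : 0 < p := by linarith
  have hup : ∀ t, p < t → t ≤ 1 → j ≤ s * t := by
    intro t ht ht1
    have ht0 : 0 < t := by linarith
    have h1 := hmin t (by linarith) ht1
    have h2 := Real.log_le_sub_one_of_pos (x := p / t) (by positivity)
    rw [Real.log_div hp0.ne' ht0.ne'] at h2
    have h3 := mul_le_mul_of_nonneg_left h2 hj.le
    have h4 : j * (p / t - 1) = -(j / t * (t - p)) := by field_simp; ring
    have h5 : j / t * (t - p) ≤ s * (t - p) := by linarith
    exact (div_le_iff₀ ht0).1 (le_of_mul_le_mul_right h5 (by linarith))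
  have hdown : ∀ t, l ≤ t → t < p → s * t ≤ j := by
    intro t ht1 ht
    have ht0 : 0 < t := by linarith
    have h1 := hmin t ht1 (by linarith)
    have h2 := Real.log_le_sub_one_of_pos (x := p / t) (by positivity)
    rw [Real.log_div hp0.ne' ht0.ne'] at h2
    have h3 := mul_le_mul_of_nonneg_left h2 hj.le
    have h4 : j * (p / t - 1) = j / t * (p - t) := by field_simp
    have h5 : s * (p - t) ≤ j / t * (p - t) := by linarith
    exact (le_div_iff₀ ht0).1 (le_of_mul_le_mul_right h5 (by linarith))
  constructor
  · intro hp1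
    by_contra! hcon
    have hs : 0 < s := by linarith [hup 1 hp1 le_rfl]
    have hps : p < j / s := by rw [lt_div_iff₀ hs]; linarith
    have h := hup (min 1 ((p + j / s) / 2)) (lt_min hp1 (by linarith)) (min_le_left _ _)
    have h2 := mul_le_mul_of_nonneg_left (min_le_right 1 ((p + j / s) / 2)) hs.le
    have h3 : s * ((p + j / s) / 2) = (s * p + j) / 2 := by field_simp
    linarith
  · intro hlp'
    by_contra! hcon
    have hs : 0 < s := by
      by_contra hs
      nlinarith
    have hps : j / s < p := by rw [div_lt_iff₀ hs]; linarith
    have h := hdown (max l ((p + j / s) / 2)) (le_max_left _ _) (max_lt hlp' (by linarith))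
    have h2 := mul_le_mul_of_nonneg_left (le_max_right l ((p + j / s) / 2)) hs.le
    have h3 : s * ((p + j / s) / 2) = (s * p + j) / 2 := by field_simp
    linarith

/-- The weight of the `j`-th squared subgradient in the regret bound. -/
noncomputable def weight (j : ℕ) : ℝ :=
  if j = 1 then 2 / 5 else if j = 2 then 293 / 1000 else 1 / j

lemma weight_nonneg (j : ℕ) : 0 ≤ weight j := by
  unfold weight
  split_ifs <;> positivity

lemma sum_weight_le {m : ℕ} (hm : 2 ≤ m) : ∑ j ∈ Finset.Icc 1 m, weight j ≤ Real.log m := by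
  induction m, hm using Nat.le_induction with
  | base =>
    rw [Finset.sum_Icc_succ_top (by norm_num)]
    simp only [Nat.reduceAdd, Finset.Icc_self, Finset.sum_singleton]
    simp only [weight]
    norm_num
    linarith [Real.log_two_gt_d9]
  | succ k hk ih =>
    rw [Finset.sum_Icc_succ_top (by omega)]
    have hk0 : (0 : ℝ) < k := by positivity
    have hk1 : (0 : ℝ) < ((k + 1 : ℕ) : ℝ) := by positivity
    have h := Real.one_sub_inv_le_log_of_pos (x := ((k + 1 : ℕ) : ℝ) / k) (by positivity)
    rw [Real.log_div hk1.ne' hk0.ne'] at h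
    have h2 : 1 - (((k + 1 : ℕ) : ℝ) / k)⁻¹ = weight (k + 1) := by
      rw [weight, if_neg (by omega), if_neg (by omega)]
      push_cast
      field_simp
      ring
    linarith

/-- Regret of one normalized coordinate. The invariant `inv` starts with `base`, its
increments are estimated by `step`. -/
lemma one_dim {m : ℕ} (hm : 2 ≤ m) {l w : ℝ} (hl : 0 < l) (hlw : l ≤ w) (hw : w ≤ 1)
    (x p : ℕ → ℝ) (hp1 : p 1 = 1)
    (hpr : ∀ j, 1 ≤ j → j ≤ m + 1 → l ≤ p j ∧ p j ≤ 1)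
    (hmin : ∀ j, 1 ≤ j → j ≤ m → ∀ t, l ≤ t → t ≤ 1 →
      (∑ i ∈ Finset.Icc 1 j, x i) * p (j + 1) - j * Real.log (p (j + 1)) ≤
        (∑ i ∈ Finset.Icc 1 j, x i) * t - j * Real.log t)
    (hneg : ∀ j, 1 ≤ j → j ≤ m → x j < 0 → p j = l) :
    ∑ i ∈ Finset.Icc 1 m, (max (x i) 0 * (p i - w) - Real.log (p i) + Real.log w) ≤
      ∑ i ∈ Finset.Icc 1 m, weight i / 2 * x i ^ 2 := by
  have hfo : ∀ j, 1 ≤ j → j ≤ m →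
      (p (j + 1) < 1 → (j : ℝ) ≤ (∑ i ∈ Finset.Icc 1 j, x i) * p (j + 1)) ∧
      (l < p (j + 1) → (∑ i ∈ Finset.Icc 1 j, x i) * p (j + 1) ≤ j) := fun j h1 h2 =>
    first_order (by positivity) hl (hpr (j + 1) (by omega) (by omega)).1
      (hpr (j + 1) (by omega) (by omega)).2 (hmin j h1 h2)
  -- the potential is the regret so far, compared with the dual value at the next iterate, and
  -- with one logarithm of that iterate added in advance
  have inv : ∀ j, 2 ≤ j → j ≤ m →
      ∑ i ∈ Finset.Icc 1 j, (max (x i) 0 * (p i - w) - Real.log (p i) + Real.log w)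
        + (∑ i ∈ Finset.Icc 1 j, x i) * w - j * Real.log w
        - (∑ i ∈ Finset.Icc 1 j, x i) * p (j + 1) + j * Real.log (p (j + 1))
        - Real.log (p (j + 1))
      ≤ ∑ i ∈ Finset.Icc 1 j, weight i / 2 * x i ^ 2
        + credit j (∑ i ∈ Finset.Icc 1 j, x i) (p (j + 1)) w := by
    intro j hj
    induction j, hj using Nat.le_induction with
    | base =>
      intro h2
      have f1 := hfo 1 le_rfl (by omega)
      have f2 := hfo 2 (by norm_num) h2
      have n1 := hneg 1 le_rfl (by omega)
      have n2 := hneg 2 (by norm_num) h2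
      have r2 := hpr 2 (by norm_num) (by omega)
      have r3 := hpr 3 (by norm_num) (by omega)
      rw [Finset.sum_Icc_succ_top (by norm_num)] at f2
      simp only [Finset.sum_Icc_succ_top (show 1 ≤ 1 + 1 by norm_num), Nat.reduceAdd,
        Finset.Icc_self, Finset.sum_singleton, Nat.cast_one, Nat.cast_ofNat] at f1 f2 ⊢
      rw [hp1] at n1 ⊢
      have h := base hl r2.1 r2.2 r3.1 r3.2 hlw hw f1.1 f1.2 f2.1 f2.2 n1 n2
      simp only [weight]
      norm_num
      linarith
    | succ k hk ih =>
      intro hkm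
      have ih := ih (by omega)
      have f1 := hfo k (by omega) (by omega)
      have f2 := hfo (k + 1) (by omega) hkm
      have r1 := hpr (k + 1) (by omega) (by omega)
      have r2 := hpr (k + 1 + 1) (by omega) (by omega)
      have n := hneg (k + 1) (by omega) hkm
      simp only [Finset.sum_Icc_succ_top (show 1 ≤ k + 1 by omega), Nat.cast_add, Nat.cast_one]
        at f2 ⊢
      have h := step (k := k) (by exact_mod_cast hk) hl r1.1 r1.2 r2.1 r2.2 hlw hw f1.1 f1.2
        f2.1 f2.2 n
      have hw' : weight (k + 1) / 2 * x (k + 1) ^ 2 = x (k + 1) ^ 2 / (2 * (k + 1)) := by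
        rw [weight, if_neg (by omega), if_neg (by omega)]
        push_cast
        field_simp
      rw [hw']
      linarith
  have hfin := inv m hm le_rfl
  -- the comparator is no better than the last minimizer; the gap pays for the final credit
  have hB := hmin m (by omega) le_rfl w hlw hw
  have f := hfo m (by omega) le_rfl
  have r := hpr (m + 1) (by omega) le_rfl
  set s := ∑ i ∈ Finset.Icc 1 m, x i
  set P := p (m + 1)
  have hm2 : (2 : ℝ) ≤ m := by exact_mod_cast hm
  rcases r.2.lt_or_eq with hP | hP
  · rw [credit_of_lt hP] at hfin
    have := Real.log_nonpos (by linarith [r.1]) r.2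
    linarith
  · rw [hP, credit_one, Real.log_one] at hfin
    rw [hP] at f
    suffices 3 / 4 * (1 - w) * (1 - (max s 0 / m) ^ 2) ≤ s * w - m * Real.log w - s by linarith
    have hlog := mul_le_mul_of_nonneg_left
      (Real.log_le_sub_one_of_pos (show 0 < w by linarith)) (show (0 : ℝ) ≤ m by linarith)
    rcases hw.lt_or_eq with hw1 | rfl
    · have hs : s ≤ m := by linarith [f.2 (by linarith)]
      have key : 3 / 4 * (1 - (max s 0 / m) ^ 2) ≤ m - s := by
        rcases le_total s 0 with h | h
        · rw [max_eq_right h]; norm_num; linarith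
        · rw [max_eq_left h]
          obtain ⟨A, hA⟩ : ∃ A, A = s / m := ⟨_, rfl⟩
          have hsA : s = m * A := by rw [hA]; field_simp
          have hA1 : A ≤ 1 := by rw [hA]; exact (div_le_one (by linarith)).2 hs
          rw [← hA, hsA]
          nlinarith [mul_nonneg (show (0 : ℝ) ≤ m - 2 by linarith) (show 0 ≤ 1 - A by linarith), sq_nonneg (1 - A)]
      have := mul_le_mul_of_nonneg_right key (show 0 ≤ 1 - w by linarith)
      linarith
    · simp

/-! ### Reduction to one coordinate -/

lemma sum_update_sub {n : ℕ} (f : Fin n → ℝ → ℝ) (ω : Fin n → ℝ) (i : Fin n) (t : ℝ) :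
    ∑ k, f k (Function.update ω i t k) - ∑ k, f k (ω k) = f i t - f i (ω i) := by
  rw [← Finset.sum_sub_distrib, Finset.sum_eq_single i]
  · simp
  · intro k _ hk
    simp [Function.update_of_ne hk]
  · simp

lemma sum_fin_succ (m : ℕ) (G : ℕ → ℝ) :
    ∑ j : Fin m, G (j.1 + 1) = ∑ j ∈ Finset.Icc 1 m, G j := by
  induction m with
  | zero => simp
  | succ k ih =>
    rw [Fin.sum_univ_castSucc, Finset.sum_Icc_succ_top (by omega), ← ih]
    simp

/-- `one_dim` for one coordinate of the original problem, rescaled by `τ`. -/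
lemma coordinate {m : ℕ} (hm : 2 ≤ m) {ρ τ a b : ℝ} (hρ : 0 < ρ) (hτ : 0 < τ) (ha : 0 < a)
    (hab : a ≤ b) (hb : b ≤ 1 / τ) (g z : ℕ → ℝ) (hz1 : z 1 = 1 / τ)
    (hz : ∀ j, 1 ≤ j → j ≤ m + 1 → a ≤ z j ∧ z j ≤ 1 / τ)
    (hmin : ∀ j, 1 ≤ j → j ≤ m → ∀ t, a ≤ t → t ≤ 1 / τ →
      (∑ i ∈ Finset.Icc 1 j, g i) * z (j + 1) - j * ρ * Real.log (z (j + 1)) ≤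
        (∑ i ∈ Finset.Icc 1 j, g i) * t - j * ρ * Real.log t)
    (hneg : ∀ j, 1 ≤ j → j ≤ m → g j < 0 → z j = a) :
    ∑ j ∈ Finset.Icc 1 m, (max (g j) 0 * (z j - b) - ρ * Real.log (z j) + ρ * Real.log b) ≤
      ∑ j ∈ Finset.Icc 1 m, weight j / 2 * (g j ^ 2 / (ρ * τ ^ 2)) := by
  have hlog : ∀ t, 0 < t → Real.log (τ * t) = Real.log τ + Real.log t := fun t ht =>
    Real.log_mul hτ.ne' ht.ne'
  have h := one_dim hm (l := τ * a) (w := τ * b) (by positivity) (by gcongr)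
    (by rw [le_div_iff₀ hτ] at hb; linarith) (fun j => g j / (ρ * τ)) (fun j => τ * z j)
    (by rw [hz1]; field_simp)
    (fun j h1 h2 => by
      have := hz j h1 h2
      rw [le_div_iff₀ hτ] at this
      exact ⟨by have := this.1; gcongr, by linarith⟩)
    (fun j h1 h2 t ht1 ht2 => by
      have ht0 : 0 < t := lt_of_lt_of_le (by positivity) ht1
      have h0 := hmin j h1 h2 (t / τ) (by rw [le_div_iff₀ hτ]; linarith) (by gcongr)
      rw [Real.log_div ht0.ne' hτ.ne'] at h0
      rw [show ∑ i ∈ Finset.Icc 1 j, g i / (ρ * τ) = (∑ i ∈ Finset.Icc 1 j, g i) / (ρ * τ) from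
        (Finset.sum_div ..).symm, hlog _ (ha.trans_le (hz (j + 1) (by omega) (by omega)).1)]
      refine le_of_mul_le_mul_left ?_ hρ
      have e1 : ∀ S y : ℝ, ρ * (S / (ρ * τ) * y) = S * (y / τ) := by
        intro S y; field_simp
      rw [mul_sub, mul_sub, e1, e1, mul_div_cancel_left₀ _ hτ.ne']
      linarith)
    (fun j h1 h2 hx => by
      have : g j < 0 := by
        by_contra hcon
        have : 0 ≤ g j / (ρ * τ) := div_nonneg (by linarith) (by positivity)
        linarith
      rw [hneg j h1 h2 this])
  have h := mul_le_mul_of_nonneg_left h hρ.le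
  rw [Finset.mul_sum, Finset.mul_sum] at h
  refine (Eq.le ?_).trans (h.trans (Eq.le ?_))
  · refine Finset.sum_congr rfl fun j hj => ?_
    obtain ⟨h1, h2⟩ := Finset.mem_Icc.1 hj
    rw [hlog _ (ha.trans_le (hz j h1 (by omega)).1), hlog _ (ha.trans_le hab)]
    have : max (g j / (ρ * τ)) 0 = max (g j) 0 / (ρ * τ) := by
      have h0 : 0 ≤ ρ * τ := by positivity
      simpa using max_div_div_right h0 (g j) 0
    rw [this]
    field_simp
    ring
  · refine Finset.sum_congr rfl fun j _ => ?_
    field_simp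

/-! ### The regret bound -/

/-- Auxiliary regret bound for the regularized dual averaging sequence of the
online market-clearing mechanism: the cumulative regularized objective of the
online strategies exceeds that of any fixed strategy by at most
`(v̄²/(2·min_i ρ_i τ_i²))·log m`. -/
theorem rda_auxiliary_regret_bound
    (n m : ℕ) (hn : 0 < n) (hm : 2 ≤ m)
    (v : Fin n → Fin m → ℝ) (vbar : ℝ)
    (hv : ∀ i j, v i j ∈ Set.Icc (0 : ℝ) vbar)
    (rho tau wlow : Fin n → ℝ)
    (hrho : ∀ i, 0 < rho i) (htau : ∀ i, 1 ≤ tau i)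
    (hwlow : ∀ i, 0 < wlow i ∧ wlow i ≤ 1 / tau i)
    (W : Set (Fin n → ℝ))
    (hWdef : W = {ω | ∀ i, ω i ∈ Set.Icc (wlow i) (1 / tau i)})
    (phat : Fin m → (Fin n → ℝ) → ℝ)
    (hphat : ∀ jj ω, phat jj ω =
      Finset.univ.sup' (Finset.univ_nonempty_iff.mpr ⟨⟨0, hn⟩⟩)
        (fun i => ω i * v i jj))
    (omega g gbar : ℕ → Fin n → ℝ)
    (hinit : ∀ i, omega 1 i = 1 / tau i)
    (hgbar0 : gbar 0 = 0)
    (hgnorm : ∀ jj : Fin m, Real.sqrt (∑ i, (g (jj.1 + 1) i) ^ 2) ≤ vbar)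
    (hsub : ∀ jj : Fin m, ∀ u ∈ W,
      phat jj (omega (jj.1 + 1)) +
        (∑ i, g (jj.1 + 1) i * (u i - omega (jj.1 + 1) i)) ≤ phat jj u)
    (hgbar : ∀ j : ℕ, 1 ≤ j → j ≤ m →
      gbar j = fun i => (((j : ℝ) - 1) * gbar (j - 1) i + g j i) / (j : ℝ))
    (hupdate : ∀ j : ℕ, 1 ≤ j → j ≤ m →
      omega (j + 1) ∈ W ∧ ∀ ω ∈ W,
        (∑ i, ((j : ℝ) * gbar j i) * (omega (j + 1) i - omega 1 i)) -
          (j : ℝ) * (∑ i, rho i * Real.log (omega (j + 1) i)) ≤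
        (∑ i, ((j : ℝ) * gbar j i) * (ω i - omega 1 i)) -
          (j : ℝ) * ∑ i, rho i * Real.log (ω i)) :
    ∀ w ∈ W,
      (∑ jj : Fin m, (phat jj (omega (jj.1 + 1)) -
          ∑ i, rho i * Real.log (omega (jj.1 + 1) i))) -
        (∑ jj : Fin m, (phat jj w - ∑ i, rho i * Real.log (w i))) ≤
      vbar ^ 2 / (2 * Finset.univ.inf' (Finset.univ_nonempty_iff.mpr ⟨⟨0, hn⟩⟩)
        (fun i => rho i * tau i ^ 2)) * Real.log m := by
  intro w hw
  have htau0 : ∀ i, 0 < tau i := fun i => lt_of_lt_of_le one_pos (htau i)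
  have hmemW : ∀ ω, ω ∈ W ↔ ∀ i, wlow i ≤ ω i ∧ ω i ≤ 1 / tau i := by
    intro ω; rw [hWdef]; rfl
  have homega : ∀ j, 1 ≤ j → j ≤ m + 1 → omega j ∈ W := by
    intro j h1 h2
    rcases h1.eq_or_lt with rfl | h1
    · rw [hmemW]
      intro i
      rw [hinit]
      exact ⟨(hwlow i).2, le_rfl⟩
    · obtain ⟨k, rfl⟩ : ∃ k, j = k + 1 := ⟨j - 1, by omega⟩
      exact (hupdate k (by omega) (by omega)).1
  have hupdW : ∀ ω ∈ W, ∀ i t, wlow i ≤ t → t ≤ 1 / tau i → Function.update ω i t ∈ W := by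
    intro ω hω i t h1 h2
    rw [hmemW] at hω ⊢
    intro k
    rcases eq_or_ne k i with rfl | hk
    · simpa using ⟨h1, by simpa using h2⟩
    · simpa [Function.update_of_ne hk] using hω k
  have hmono : ∀ jj u u', (∀ i, u i ≤ u' i) → phat jj u ≤ phat jj u' := by
    intro jj u u' h
    rw [hphat, hphat]
    exact Finset.sup'_mono_fun fun i _ => mul_le_mul_of_nonneg_right (h i) (hv i jj).1
  -- lowering a coordinate of negative slope would raise the monotone function `phat jj`
  have hneg : ∀ jj : Fin m, ∀ i, g (jj.1 + 1) i < 0 → omega (jj.1 + 1) i = wlow i := by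
    intro jj i hg
    have hjW := homega (jj.1 + 1) (by omega) (by omega)
    have hi := (hmemW _).1 hjW i
    have h1 := hsub jj _ (hupdW _ hjW i (wlow i) le_rfl (hwlow i).2)
    have h2 := hmono jj (Function.update (omega (jj.1 + 1)) i (wlow i)) (omega (jj.1 + 1)) (by
      intro k
      rcases eq_or_ne k i with rfl | hk
      · simpa using hi.1
      · simp [Function.update_of_ne hk])
    have h3 := sum_update_sub (fun k y => g (jj.1 + 1) k * (y - omega (jj.1 + 1) k))
      (omega (jj.1 + 1)) i (wlow i)
    simp only [sub_self, mul_zero, Finset.sum_const_zero, sub_zero] at h3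
    rw [h3] at h1
    nlinarith
  have hpart : ∀ j, j ≤ m → ∀ i, (j : ℝ) * gbar j i = ∑ k ∈ Finset.Icc 1 j, g k i := by
    intro j
    induction j with
    | zero => intro _ i; simp
    | succ k ih =>
      intro hk i
      rw [Finset.sum_Icc_succ_top (by omega), ← ih (by omega) i, hgbar (k + 1) (by omega) hk]
      have : ((k + 1 : ℕ) : ℝ) ≠ 0 := by positivity
      rw [mul_div_cancel₀ _ this]
      push_cast
      simp
  have hcoordmin : ∀ i, ∀ j, 1 ≤ j → j ≤ m → ∀ t, wlow i ≤ t → t ≤ 1 / tau i →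
      (∑ k ∈ Finset.Icc 1 j, g k i) * omega (j + 1) i -
          j * rho i * Real.log (omega (j + 1) i) ≤
        (∑ k ∈ Finset.Icc 1 j, g k i) * t - j * rho i * Real.log t := by
    intro i j h1 h2 t ht1 ht2
    obtain ⟨hW', hopt⟩ := hupdate j h1 h2
    have h := hopt _ (hupdW _ hW' i t ht1 ht2)
    have e1 := sum_update_sub (fun k y => (j : ℝ) * gbar j k * (y - omega 1 k))
      (omega (j + 1)) i t
    have e2 := sum_update_sub (fun k y => rho k * Real.log y) (omega (j + 1)) i t
    have e3 := congrArg (fun y => (j : ℝ) * y) e2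
    simp only [mul_sub] at e3
    rw [← hpart j h2 i]
    linarith
  -- compare with `w`, keeping the current value at the coordinates of negative slope
  have hphatreg : ∀ jj : Fin m, phat jj (omega (jj.1 + 1)) - phat jj w ≤
      ∑ i, max (g (jj.1 + 1) i) 0 * (omega (jj.1 + 1) i - w i) := by
    intro jj
    set u : Fin n → ℝ := fun i => if g (jj.1 + 1) i < 0 then omega (jj.1 + 1) i else w i with hu
    have hjW := (hmemW _).1 (homega (jj.1 + 1) (by omega) (by omega))
    have hwW := (hmemW _).1 hw
    have huW : u ∈ W := by
      rw [hmemW]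
      intro i
      simp only [hu]
      split_ifs
      · exact hjW i
      · exact hwW i
    have h1 := hsub jj u huW
    have h2 : phat jj u ≤ phat jj w := hmono jj _ _ fun i => by
      simp only [hu]
      split_ifs with hg
      · rw [hneg jj i hg]
        exact (hwW i).1
      · exact le_rfl
    have h3 : ∑ i, g (jj.1 + 1) i * (u i - omega (jj.1 + 1) i) =
        -∑ i, max (g (jj.1 + 1) i) 0 * (omega (jj.1 + 1) i - w i) := by
      rw [← Finset.sum_neg_distrib]
      refine Finset.sum_congr rfl fun i _ => ?_
      simp only [hu]
      split_ifs with hg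
      · rw [max_eq_right hg.le]; ring
      · rw [max_eq_left (not_lt.1 hg)]; ring
    linarith
  set σ := Finset.univ.inf' (Finset.univ_nonempty_iff.mpr ⟨⟨0, hn⟩⟩)
    (fun i => rho i * tau i ^ 2) with hσ
  have hσ0 : 0 < σ := by
    rw [hσ, Finset.lt_inf'_iff]
    intro i _
    have := hrho i
    have := htau0 i
    positivity
  have hgsq : ∀ j ∈ Finset.Icc 1 m, ∑ i, g j i ^ 2 / (rho i * tau i ^ 2) ≤ vbar ^ 2 / σ := by
    intro j hj
    obtain ⟨h1, h2⟩ := Finset.mem_Icc.1 hj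
    obtain ⟨k, rfl⟩ : ∃ k, j = k + 1 := ⟨j - 1, by omega⟩
    have h3 := (Real.sqrt_le_iff.1 (hgnorm ⟨k, by omega⟩)).2
    calc ∑ i, g (k + 1) i ^ 2 / (rho i * tau i ^ 2) ≤ ∑ i, g (k + 1) i ^ 2 / σ := by
          refine Finset.sum_le_sum fun i _ => ?_
          have : σ ≤ rho i * tau i ^ 2 := Finset.inf'_le _ (Finset.mem_univ i)
          gcongr
      _ = (∑ i, g (k + 1) i ^ 2) / σ := (Finset.sum_div ..).symm
      _ ≤ vbar ^ 2 / σ := by gcongr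
  have hcoord := fun i => coordinate hm (hrho i) (htau0 i) (hwlow i).1 ((hmemW _).1 hw i).1
    ((hmemW _).1 hw i).2 (fun j => g j i) (fun j => omega j i) (hinit i)
    (fun j h1 h2 => (hmemW _).1 (homega j h1 h2) i) (hcoordmin i)
    (fun j h1 h2 hg => by
      obtain ⟨k, rfl⟩ : ∃ k, j = k + 1 := ⟨j - 1, by omega⟩
      exact hneg ⟨k, by omega⟩ i hg)
  calc _ = ∑ jj : Fin m, (phat jj (omega (jj.1 + 1)) - phat jj w -
          ∑ i, rho i * Real.log (omega (jj.1 + 1) i) + ∑ i, rho i * Real.log (w i)) := by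
        rw [← Finset.sum_sub_distrib]
        exact Finset.sum_congr rfl fun jj _ => by ring
    _ ≤ ∑ jj : Fin m, ∑ i, (max (g (jj.1 + 1) i) 0 * (omega (jj.1 + 1) i - w i) -
          rho i * Real.log (omega (jj.1 + 1) i) + rho i * Real.log (w i)) := by
        refine Finset.sum_le_sum fun jj _ => ?_
        rw [Finset.sum_add_distrib, Finset.sum_sub_distrib]
        linarith [hphatreg jj]
    _ = ∑ i, ∑ j ∈ Finset.Icc 1 m, (max (g j i) 0 * (omega j i - w i) -
          rho i * Real.log (omega j i) + rho i * Real.log (w i)) := by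
        rw [sum_fin_succ m fun j => ∑ i, (max (g j i) 0 * (omega j i - w i) -
          rho i * Real.log (omega j i) + rho i * Real.log (w i)), Finset.sum_comm]
    _ ≤ ∑ i, ∑ j ∈ Finset.Icc 1 m, weight j / 2 * (g j i ^ 2 / (rho i * tau i ^ 2)) :=
        Finset.sum_le_sum fun i _ => hcoord i
    _ = ∑ j ∈ Finset.Icc 1 m, weight j / 2 * ∑ i, g j i ^ 2 / (rho i * tau i ^ 2) := by
        rw [Finset.sum_comm]
        exact Finset.sum_congr rfl fun j _ => (Finset.mul_sum ..).symm
    _ ≤ ∑ j ∈ Finset.Icc 1 m, weight j / 2 * (vbar ^ 2 / σ) := by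
        refine Finset.sum_le_sum fun j hj => mul_le_mul_of_nonneg_left (hgsq j hj) ?_
        linarith [weight_nonneg j]
    _ = vbar ^ 2 / (2 * σ) * ∑ j ∈ Finset.Icc 1 m, weight j := by
        rw [Finset.mul_sum]
        refine Finset.sum_congr rfl fun j _ => ?_
        field_simp
    _ ≤ vbar ^ 2 / (2 * σ) * Real.log m :=
        mul_le_mul_of_nonneg_left (sum_weight_le hm) (by positivity)
end
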